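/- Let n ≥ 1, let b ≥ 1 be an integer, and let α ∈ (1/2, 1] satisfy 2α − 1 < n and nb > (2α−1)(b+1). Let p(·) ∈ P^log(ℝ^n) with p⁻ > b+1 and (2α−1)·p⁺ < n(b+1). Then there exists C > 0 such that for every measurable 𝓕 : (0,∞)×ℝ^n → ℝ: N_{p(·), nb/(2α−1)}( (t,x) ↦ Σ_{j=1}^n ∫_0^t (∂_j 𝔤_{t−s}^α ∗ 𝓕(s,·))(x) ds ) ≤ C · N_{p(·)/(b+1), nb/((b+1)(2α−1))}(𝓕). -/

import Mathlib

open MeasureTheory Set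
open scoped ENNReal FourierTransform

noncomputable section

/-- Euclidean space `ℝ^n`. -/
abbrev Rn (n : ℕ) := EuclideanSpace ℝ (Fin n)

/-- Luxemburg norm of an `ℝ≥0∞`-valued function for a variable exponent `p`. -/
def luxNorm {Ω : Type*} [MeasurableSpace Ω] (μ : Measure Ω) (p : Ω → ℝ) (f : Ω → ℝ≥0∞) : ℝ≥0∞ :=
  sInf {lam : ℝ≥0∞ | 0 < lam ∧ ∫⁻ x, (f x / lam) ^ (p x) ∂μ ≤ 1}

/-- Luxemburg norm `‖f‖_{L^{p(·)}}` of a real-valued function. -/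
def luxNormR {Ω : Type*} [MeasurableSpace Ω] (μ : Measure Ω) (p : Ω → ℝ) (f : Ω → ℝ) : ℝ≥0∞ :=
  luxNorm μ p (fun x => ENNReal.ofReal |f x|)

/-- `p(·) ∈ P^log(Ω)`: measurable, with values in `[1,∞)` on `Ω`, locally log-Hölder
continuous on `Ω`, and satisfying the log-Hölder decay condition on `Ω`. -/
def IsPLog {E : Type*} [NormedAddCommGroup E] [MeasurableSpace E] (Ω : Set E) (p : E → ℝ) : Prop :=
  Measurable p ∧ (∀ x ∈ Ω, 1 ≤ p x) ∧
  ∃ C₁ > (0:ℝ), ∃ C₂ > (0:ℝ), ∃ pinf : ℝ,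
    (∀ x ∈ Ω, ∀ y ∈ Ω, x ≠ y →
      |1 / p x - 1 / p y| ≤ C₁ / Real.log (Real.exp 1 + 1 / ‖x - y‖)) ∧
    (∀ x ∈ Ω, |1 / p x - 1 / pinf| ≤ C₂ / Real.log (Real.exp 1 + ‖x‖))

/-- The fractional heat kernel `𝔤_t^α` on `ℝ^n`: the inverse Fourier transform of
`ξ ↦ exp (-t‖ξ‖^{2α})` (it is real-valued; we take the real part). -/
def gKer (n : ℕ) (α t : ℝ) (x : Rn n) : ℝ :=
  (𝓕⁻ (fun ξ : Rn n => (Real.exp (-t * ‖ξ‖ ^ (2 * α)) : ℂ)) x).re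

/-- Convolution on `ℝ^n`. -/
def conv (n : ℕ) (g f : Rn n → ℝ) (x : Rn n) : ℝ := ∫ y, g (x - y) * f y

/-- The partial derivative `∂_j 𝔤_t^α`. -/
def dKer (n : ℕ) (α t : ℝ) (j : Fin n) (z : Rn n) : ℝ :=
  fderiv ℝ (gKer n α t) z (EuclideanSpace.single j 1)

/-- `x ↦ ess sup_{t>0} |u(t,x)|`, as an `ℝ≥0∞`-valued function. -/
def timeSup (n : ℕ) (u : ℝ → Rn n → ℝ) (x : Rn n) : ℝ≥0∞ :=
  essSup (fun t => ENNReal.ofReal |u t x|) (volume.restrict (Ioi (0:ℝ)))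

/-- Mixed norm `‖f‖_{𝓛^{p(·)}_r} = max {‖f‖_{L^{p(·)}}, ‖f‖_{L^r}}`. -/
def mixedNorm (n : ℕ) (p : Rn n → ℝ) (r : ℝ) (f : Rn n → ℝ) : ℝ≥0∞ :=
  max (luxNormR volume p f) (luxNormR volume (fun _ => r) f)

/-- `N_{p(·),r}(u) = ‖x ↦ ess sup_{t>0}|u(t,x)|‖_{𝓛^{p(·)}_r}`. -/
def mixedN (n : ℕ) (p : Rn n → ℝ) (r : ℝ) (u : ℝ → Rn n → ℝ) : ℝ≥0∞ :=
  max (luxNorm volume p (timeSup n u)) (luxNorm volume (fun _ => r) (timeSup n u))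

section Auxiliary

open Filter Topology
open scoped RealInnerProductSpace NNReal

/-- The derivative in direction `v` of the real part of an inverse Fourier transform of a real
function. -/
lemma fderiv_re_fourierInv {n : ℕ} {f : Rn n → ℝ} (hf : Integrable f)
    (hf' : Integrable (fun ξ => ‖ξ‖ * f ξ)) (w v : Rn n) :
    fderiv ℝ (fun x => (𝓕⁻ (fun ξ => (f ξ : ℂ)) x).re) w v
      = -(2 * Real.pi) * ∫ ξ, ⟪ξ, v⟫ * Real.sin (2 * Real.pi * ⟪ξ, w⟫) * f ξ := by
  have hre : (fun x => (𝓕⁻ (fun ξ => (f ξ : ℂ)) x).re)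
      = fun x : Rn n => ∫ ξ, Real.cos (2 * Real.pi * ⟪ξ, x⟫) * f ξ := by
    ext x
    rw [Real.fourierInv_eq']
    have hintg : Integrable
        (fun ξ : Rn n => Complex.exp ((2 * Real.pi * ⟪ξ, x⟫ : ℝ) * Complex.I) • (f ξ : ℂ)) := by
      refine hf.ofReal.bdd_mul (c := 1) ?_ ?_
      · exact Continuous.aestronglyMeasurable (by fun_prop)
      · exact Eventually.of_forall fun ξ => by rw [Complex.norm_exp_ofReal_mul_I]
    have := integral_re hintg
    simp only [RCLike.re_eq_complex_re] at this
    rw [← this]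
    congr 1
    ext ξ
    rw [smul_eq_mul, Complex.re_mul_ofReal, Complex.exp_ofReal_mul_I_re]
  rw [hre]
  have hcos (x : Rn n) : Integrable (fun ξ => Real.cos (2 * Real.pi * ⟪ξ, x⟫) * f ξ) := by
    refine hf.bdd_mul (c := 1) (Continuous.aestronglyMeasurable (by fun_prop)) ?_
    exact Eventually.of_forall fun ξ => Real.abs_cos_le_one _
  let F' : Rn n → Rn n → (Rn n →L[ℝ] ℝ) := fun x ξ =>
    (-(2 * Real.pi) * (Real.sin (2 * Real.pi * ⟪ξ, x⟫) * f ξ)) • innerSL ℝ ξ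
  have hmeas : AEStronglyMeasurable (F' w) := by
    have h1 : AEStronglyMeasurable
        (fun ξ : Rn n => -(2 * Real.pi) * (Real.sin (2 * Real.pi * ⟪ξ, w⟫) * f ξ)) :=
      ((Continuous.aestronglyMeasurable (by fun_prop)).mul hf.aestronglyMeasurable).const_mul _
    exact h1.smul (innerSL ℝ (E := Rn n)).continuous.aestronglyMeasurable
  have hbound (x ξ : Rn n) : ‖F' x ξ‖ ≤ 2 * Real.pi * ‖‖ξ‖ * f ξ‖ := by
    simp only [F', norm_smul, innerSL_apply_norm, norm_mul, norm_neg, norm_norm]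
    have h1 : ‖Real.sin (2 * Real.pi * ⟪ξ, x⟫)‖ ≤ 1 := Real.abs_sin_le_one _
    have h2 : ‖Real.pi‖ = Real.pi := by simp [Real.pi_pos.le]
    have h3 : ‖(2:ℝ)‖ = 2 := by simp
    rw [h2, h3]
    calc 2 * Real.pi * (‖Real.sin (2 * Real.pi * ⟪ξ, x⟫)‖ * ‖f ξ‖) * ‖ξ‖
        ≤ 2 * Real.pi * (1 * ‖f ξ‖) * ‖ξ‖ := by gcongr
      _ = _ := by ring
  have hF'int : Integrable (F' w) :=
    (hf'.norm.const_mul (2 * Real.pi)).mono' hmeas (Eventually.of_forall (hbound w))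
  have key := hasFDerivAt_integral_of_dominated_of_fderiv_le (𝕜 := ℝ) (μ := volume)
    (F := fun (x ξ : Rn n) => Real.cos (2 * Real.pi * ⟪ξ, x⟫) * f ξ) (F' := F') (x₀ := w)
    (s := univ) (bound := fun ξ => 2 * Real.pi * ‖‖ξ‖ * f ξ‖) univ_mem
    (Eventually.of_forall fun x => (hcos x).aestronglyMeasurable) (hcos w) hmeas
    (Eventually.of_forall fun ξ x _ => hbound x ξ) (hf'.norm.const_mul _)
    (Eventually.of_forall fun ξ x _ => by
      have h1 : HasFDerivAt (fun x : Rn n => 2 * Real.pi * ⟪ξ, x⟫)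
          ((2 * Real.pi) • innerSL ℝ ξ) x := ((innerSL ℝ ξ).hasFDerivAt).const_mul _
      have h2 := (h1.cos).mul_const (f ξ)
      refine h2.congr_fderiv ?_
      ext y
      simp [F']
      ring)
  rw [key.fderiv, ContinuousLinearMap.integral_apply hF'int, ← integral_const_mul]
  congr 1
  ext ξ
  simp only [F', smul_apply, innerSL_apply_apply, smul_eq_mul]
  ring

/-- The Fourier sine-type integral representing (up to a constant) the derivative in direction
`v` of the inverse Fourier transform of the radial multiplier `m ‖·‖`. -/
def gradInt {n : ℕ} (v w : Rn n) (m : ℝ → ℝ) : ℝ :=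
  ∫ ξ, ⟪ξ, v⟫ * Real.sin (2 * Real.pi * ⟪ξ, w⟫) * m ‖ξ‖

lemma integrable_radial_stretched_exp {n : ℕ} (hn : 1 ≤ n) {k : ℝ} (hk : 0 ≤ k) {t s : ℝ}
    (ht : 0 < t) (hs : 0 < s) :
    Integrable (fun ξ : Rn n => ‖ξ‖ ^ k * Real.exp (-t * ‖ξ‖ ^ s)) := by
  have : Nonempty (Fin n) := ⟨⟨0, hn⟩⟩
  rw [integrable_fun_norm_addHaar volume (f := fun r => r ^ k * Real.exp (-t * r ^ s))]
  have h := integrableOn_rpow_mul_exp_neg_mul_rpow (p := s) (s := k + ((n:ℝ) - 1)) (b := t)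
    (by have : (1:ℝ) ≤ n := by exact_mod_cast hn
        linarith) hs ht
  refine h.congr_fun (fun r hr => ?_) measurableSet_Ioi
  have hr : 0 < r := hr
  simp only [finrank_euclideanSpace, Fintype.card_fin, smul_eq_mul]
  rw [Real.rpow_add hr, ← Real.rpow_natCast r (n - 1), Nat.cast_sub hn]
  push_cast
  ring

lemma gradInt_gaussian {n : ℕ} (hn : 1 ≤ n) {δ : ℝ} (hδ : 0 < δ) (v w : Rn n) :
    gradInt v w (fun r => Real.exp (-δ * r ^ 2))
      = (Real.pi / δ) ^ ((n:ℝ) / 2) * (Real.pi / δ) * ⟪w, v⟫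
        * Real.exp (-(Real.pi ^ 2 * ‖w‖ ^ 2 / δ)) := by
  have i0 : Integrable (fun ξ : Rn n => Real.exp (-δ * ‖ξ‖ ^ 2)) := by
    simpa using integrable_radial_stretched_exp hn le_rfl hδ (two_pos)
  have i1 : Integrable (fun ξ : Rn n => ‖ξ‖ * Real.exp (-δ * ‖ξ‖ ^ 2)) := by
    simpa using integrable_radial_stretched_exp hn zero_le_one hδ (two_pos)
  have h := fderiv_re_fourierInv i0 i1 w v
  have hg : (fun x : Rn n => (𝓕⁻ (fun ξ : Rn n => (Real.exp (-δ * ‖ξ‖ ^ 2) : ℂ)) x).re)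
      = fun x => (Real.pi / δ) ^ ((n:ℝ) / 2) * Real.exp (-(Real.pi ^ 2 * ‖x‖ ^ 2 / δ)) := by
    ext x
    rw [Real.fourierInv_eq_fourier_neg]
    have := fourier_gaussian_innerProductSpace (V := Rn n) (b := (δ:ℂ)) (by simpa using hδ) (-x)
    have e : (fun ξ : Rn n => (Real.exp (-δ * ‖ξ‖ ^ 2) : ℂ))
      = fun ξ : Rn n => Complex.exp (-(δ:ℂ) * ‖ξ‖ ^ 2) := by ext ξ; push_cast; rfl
    rw [e, this]
    have e2 : ((Real.pi:ℂ) / δ) ^ ((Module.finrank ℝ (Rn n) : ℂ) / 2)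
        = (((Real.pi / δ) ^ ((n:ℝ)/2) : ℝ) : ℂ) := by
      rw [Complex.ofReal_cpow (by positivity)]
      simp
    have e3 : Complex.exp (-(Real.pi:ℂ) ^ 2 * ‖-x‖ ^ 2 / δ)
        = ((Real.exp (-(Real.pi ^ 2 * ‖x‖ ^ 2 / δ)) : ℝ) : ℂ) := by
      rw [norm_neg]; push_cast; congr 1; ring
    rw [e2, e3, ← Complex.ofReal_mul, Complex.ofReal_re]
  rw [hg] at h
  have hd : HasFDerivAt (fun x : Rn n => (Real.pi / δ) ^ ((n:ℝ) / 2)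
        * Real.exp (-(Real.pi ^ 2 * ‖x‖ ^ 2 / δ)))
      ((Real.pi / δ) ^ ((n:ℝ) / 2) • (Real.exp (-(Real.pi ^ 2 * ‖w‖ ^ 2 / δ)) •
        (-(Real.pi ^ 2 / δ) • (2 • innerSL ℝ w)))) w := by
    have h1 := ((hasStrictFDerivAt_norm_sq w).hasFDerivAt.const_mul (-(Real.pi ^ 2 / δ)))
    have h2 := (h1.exp).const_mul ((Real.pi / δ) ^ ((n:ℝ) / 2))
    have e (x : Rn n) : -(Real.pi ^ 2 * ‖x‖ ^ 2 / δ) = -(Real.pi ^ 2 / δ) * ‖x‖ ^ 2 := by ring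
    simp only [e]
    exact h2
  rw [hd.fderiv] at h
  have hpi := Real.pi_pos
  unfold gradInt
  simp only [smul_apply, smul_eq_mul,
    innerSL_apply_apply, nsmul_eq_mul] at h
  have h3 : (2 * Real.pi) * ∫ ξ, ⟪ξ, v⟫ * Real.sin (2 * Real.pi * ⟪ξ, w⟫)
        * Real.exp (-δ * ‖ξ‖ ^ 2)
      = (2 * Real.pi) * ((Real.pi / δ) ^ ((n:ℝ) / 2) * (Real.pi / δ) * ⟪w, v⟫
        * Real.exp (-(Real.pi ^ 2 * ‖w‖ ^ 2 / δ))) := by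
    push_cast at h
    linear_combination h
  exact mul_left_cancel₀ (by positivity) h3

lemma gradInt_gaussian_bound {n : ℕ} (hn : 1 ≤ n) {δ : ℝ} (hδ : 0 < δ) {v : Rn n} (hv : ‖v‖ ≤ 1)
    (w : Rn n) :
    ‖w‖ ^ (n + 1) * |gradInt v w (fun r => Real.exp (-δ * r ^ 2))|
      ≤ 1 + (n + 2).factorial := by
  rw [gradInt_gaussian hn hδ]
  have hpi := Real.pi_pos
  set y : ℝ := Real.pi * ‖w‖ ^ 2 / δ with hy
  have hy0 : 0 ≤ y := by positivity
  have hyk : (Real.pi / δ) ^ ((n:ℝ) / 2) * (Real.pi / δ) * ‖w‖ ^ (n + 2)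
      = y ^ (((n + 2 : ℕ):ℝ) / 2) := by
    have e1 : y = (Real.pi / δ) * ‖w‖ ^ 2 := by rw [hy]; ring
    have e2 : ((n + 2 : ℕ):ℝ) / 2 = (n:ℝ)/2 + 1 := by push_cast; ring
    rw [e1, Real.mul_rpow (by positivity) (by positivity), ← Real.rpow_natCast_mul (norm_nonneg w)]
    rw [show ((2:ℕ):ℝ) * (((n + 2 : ℕ):ℝ) / 2) = ((n + 2 : ℕ):ℝ) by push_cast; ring,
      Real.rpow_natCast, e2, Real.rpow_add (by positivity), Real.rpow_one]
  have habs : |(Real.pi / δ) ^ ((n:ℝ) / 2) * (Real.pi / δ) * ⟪w, v⟫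
        * Real.exp (-(Real.pi ^ 2 * ‖w‖ ^ 2 / δ))|
      ≤ (Real.pi / δ) ^ ((n:ℝ) / 2) * (Real.pi / δ) * ‖w‖ * Real.exp (-y) := by
    rw [abs_mul, abs_mul, abs_of_nonneg (by positivity : 0 ≤ (Real.pi / δ) ^ ((n:ℝ) / 2)
      * (Real.pi / δ)), Real.abs_exp]
    have h1 : |⟪w, v⟫| ≤ ‖w‖ := (abs_real_inner_le_norm w v).trans
      (mul_le_of_le_one_right (norm_nonneg _) hv)
    have h2 : y ≤ Real.pi ^ 2 * ‖w‖ ^ 2 / δ := by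
      have : Real.pi ^ 2 * ‖w‖ ^ 2 / δ = Real.pi * y := by rw [hy]; ring
      rw [this]
      nlinarith [Real.pi_gt_three]
    gcongr
  have hpow : y ^ (((n + 2 : ℕ):ℝ) / 2) ≤ 1 + y ^ (n + 2) := by
    rcases le_total y 1 with h | h
    · have := Real.rpow_le_one hy0 h (by positivity : 0 ≤ ((n + 2 : ℕ):ℝ) / 2)
      have h2 : 0 ≤ y ^ (n + 2) := by positivity
      linarith
    · have : y ^ (((n + 2 : ℕ):ℝ) / 2) ≤ y ^ (((n + 2 : ℕ):ℝ)) :=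
        Real.rpow_le_rpow_of_exponent_le h (by
          have : (0:ℝ) ≤ ((n+2:ℕ):ℝ) := by positivity
          linarith)
      rw [Real.rpow_natCast] at this
      linarith
  have hfac : y ^ (n + 2) ≤ (n + 2).factorial * Real.exp y := by
    have := Real.pow_div_factorial_le_exp y hy0 (n + 2)
    rw [div_le_iff₀ (by positivity)] at this
    linarith
  calc _ ≤ ‖w‖ ^ (n + 1) * ((Real.pi / δ) ^ ((n:ℝ) / 2) * (Real.pi / δ) * ‖w‖ * Real.exp (-y)) := by
        gcongr
    _ = y ^ (((n + 2 : ℕ):ℝ) / 2) * Real.exp (-y) := by rw [← hyk]; ring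
    _ ≤ (1 + (n + 2).factorial * Real.exp y) * Real.exp (-y) := by gcongr; linarith
    _ = Real.exp (-y) + (n + 2).factorial * (Real.exp y * Real.exp (-y)) := by ring
    _ ≤ 1 + (n + 2).factorial := by
        rw [← Real.exp_add, add_neg_cancel, Real.exp_zero, mul_one]
        gcongr
        exact Real.exp_le_one_iff.2 (by linarith)

/-- Bounded radial multipliers `m (‖·‖ ^ 2)` all of whose Gaussian regularisations have a kernel
with gradient bounded by a fixed multiple of `‖w‖ ^ (-(n + 1))`. -/
structure HasGradBound (n : ℕ) (m : ℝ → ℝ) : Prop where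
  meas : Measurable m
  abs_le_one : ∀ r, 0 ≤ r → |m r| ≤ 1
  bound : ∀ δ > 0, ∀ v w : Rn n, ‖v‖ ≤ 1 →
    ‖w‖ ^ (n + 1) * |gradInt v w (fun r => Real.exp (-δ * r ^ 2) * m (r ^ 2))|
      ≤ 1 + (n + 2).factorial

lemma hasGradBound_one {n : ℕ} (hn : 1 ≤ n) : HasGradBound n (fun _ => 1) where
  meas := measurable_const
  abs_le_one _ _ := by simp
  bound δ hδ v w hv := by simpa using gradInt_gaussian_bound hn hδ hv w

lemma norm_inner_mul_sin_le {n : ℕ} {v : Rn n} (hv : ‖v‖ ≤ 1) (w ξ : Rn n) :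
    ‖⟪ξ, v⟫ * Real.sin (2 * Real.pi * ⟪ξ, w⟫)‖ ≤ ‖ξ‖ := by
  rw [norm_mul]
  calc ‖⟪ξ, v⟫‖ * ‖Real.sin (2 * Real.pi * ⟪ξ, w⟫)‖ ≤ (‖ξ‖ * ‖v‖) * 1 := by
        gcongr
        · exact norm_inner_le_norm ξ v
        · exact Real.abs_sin_le_one _
    _ ≤ ‖ξ‖ := by rw [mul_one]; exact mul_le_of_le_one_right (norm_nonneg _) hv

lemma integrable_norm_mul_gaussian {n : ℕ} (hn : 1 ≤ n) {δ : ℝ} (hδ : 0 < δ) :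
    Integrable (fun ξ : Rn n => ‖ξ‖ * Real.exp (-δ * ‖ξ‖ ^ 2)) := by
  simpa using integrable_radial_stretched_exp hn zero_le_one hδ two_pos

lemma tendsto_gradInt {n : ℕ} {v : Rn n} (hv : ‖v‖ ≤ 1) (w : Rn n)
    {f : ℕ → ℝ → ℝ} {g b : ℝ → ℝ} (hf : ∀ k, Measurable (f k))
    (hb : Integrable (fun ξ : Rn n => ‖ξ‖ * b ‖ξ‖)) (hfb : ∀ k r, 0 ≤ r → |f k r| ≤ b r)
    (hlim : ∀ r, 0 ≤ r → Tendsto (fun k => f k r) atTop (𝓝 (g r))) :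
    Tendsto (fun k => gradInt v w (f k)) atTop (𝓝 (gradInt v w g)) := by
  refine tendsto_integral_of_dominated_convergence (fun ξ : Rn n => ‖ξ‖ * b ‖ξ‖) (fun k => ?_) hb
    (fun k => Eventually.of_forall fun ξ => ?_) (Eventually.of_forall fun ξ => ?_)
  · refine AEStronglyMeasurable.mul (Continuous.aestronglyMeasurable (by fun_prop)) ?_
    exact ((hf k).comp measurable_norm).aestronglyMeasurable
  · rw [norm_mul]
    have := hfb k ‖ξ‖ (norm_nonneg _)
    gcongr
    · exact norm_inner_mul_sin_le hv w ξ
    · exact this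
  · exact (hlim _ (norm_nonneg _)).const_mul _

lemma HasGradBound.of_tendsto {n : ℕ} (hn : 1 ≤ n) {f : ℕ → ℝ → ℝ} {g : ℝ → ℝ}
    (hf : ∀ k, HasGradBound n (f k)) (hg : Measurable g)
    (hlim : ∀ r, 0 ≤ r → Tendsto (fun k => f k r) atTop (𝓝 (g r))) : HasGradBound n g where
  meas := hg
  abs_le_one r hr := le_of_tendsto (hlim r hr).abs
    (Eventually.of_forall fun k => (hf k).abs_le_one r hr)
  bound δ hδ v w hv := by
    have := tendsto_gradInt (n := n) hv w (f := fun k r => Real.exp (-δ * r ^ 2) * f k (r ^ 2))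
      (g := fun r => Real.exp (-δ * r ^ 2) * g (r ^ 2)) (b := fun r => Real.exp (-δ * r ^ 2))
      (fun k => (by fun_prop : Measurable fun r : ℝ => Real.exp (-δ * r ^ 2)).mul
        ((hf k).meas.comp (by fun_prop))) (integrable_norm_mul_gaussian hn hδ)
      (fun k r hr => by
        rw [abs_mul, Real.abs_exp]
        exact mul_le_of_le_one_right (Real.exp_pos _).le ((hf k).abs_le_one _ (by positivity)))
      (fun r hr => (hlim _ (by positivity)).const_mul _)
    exact le_of_tendsto (this.abs.const_mul _)
      (Eventually.of_forall fun k => (hf k).bound δ hδ v w hv)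

/-- The class of multipliers is stable under multiplication by Laplace transforms of probability
measures on `[0, ∞)`. -/
lemma HasGradBound.mul_laplace {n : ℕ} (hn : 1 ≤ n) {m : ℝ → ℝ} (hm : HasGradBound n m)
    (ν : Measure ℝ) [IsProbabilityMeasure ν] (hν : ∀ᵐ u ∂ν, 0 ≤ u) :
    HasGradBound n (fun r => m r * ∫ u, Real.exp (-u * r) ∂ν) where
  meas := by
    refine hm.meas.mul ?_
    have : StronglyMeasurable (fun p : ℝ × ℝ => Real.exp (-p.2 * p.1)) :=
      (by fun_prop : Continuous fun p : ℝ × ℝ => Real.exp (-p.2 * p.1)).stronglyMeasurable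
    exact this.integral_prod_right.measurable
  abs_le_one r hr := by
    rw [abs_mul]
    have h : |∫ u, Real.exp (-u * r) ∂ν| ≤ 1 := by
      have := norm_integral_le_of_norm_le_const (μ := ν) (f := fun u => Real.exp (-u * r)) (C := 1)
        (by filter_upwards [hν] with u hu
            rw [Real.norm_eq_abs, Real.abs_exp, Real.exp_le_one_iff]
            nlinarith [mul_nonneg hu hr])
      simpa using this
    exact mul_le_one₀ (hm.abs_le_one r hr) (abs_nonneg _) h
  bound δ hδ v w hv := by
    let a : Rn n → ℝ := fun ξ => ⟪ξ, v⟫ * Real.sin (2 * Real.pi * ⟪ξ, w⟫)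
    have ha : Measurable a := Continuous.measurable (by fun_prop)
    have hmn : Measurable (fun ξ : Rn n => m (‖ξ‖ ^ 2)) := hm.meas.comp (by fun_prop)
    let H : Rn n → ℝ → ℝ := fun ξ u => a ξ * (Real.exp (-(δ + u) * ‖ξ‖ ^ 2) * m (‖ξ‖ ^ 2))
    have hH : Integrable (Function.uncurry H) (volume.prod ν) := by
      refine Integrable.mono' (g := fun z : Rn n × ℝ => (‖z.1‖ * Real.exp (-δ * ‖z.1‖ ^ 2)) * 1)
        ((integrable_norm_mul_gaussian hn hδ).mul_prod (integrable_const 1)) ?_ ?_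
      · refine Measurable.aestronglyMeasurable ?_
        refine (ha.comp measurable_fst).mul (Measurable.mul ?_ (hmn.comp measurable_fst))
        exact Continuous.measurable (by fun_prop)
      · have h2 : ∀ᵐ z ∂((volume : Measure (Rn n)).prod ν), 0 ≤ z.2 :=
          Measure.quasiMeasurePreserving_snd.ae hν
        filter_upwards [h2] with z hz
        simp only [Function.uncurry, H, mul_one]
        rw [norm_mul (a z.1), norm_mul (Real.exp _), Real.norm_eq_abs (Real.exp _), Real.abs_exp]
        have h3 : ‖m (‖z.1‖ ^ 2)‖ ≤ 1 := hm.abs_le_one _ (by positivity)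
        have h4 : ‖a z.1‖ ≤ ‖z.1‖ := norm_inner_mul_sin_le hv w z.1
        have h5 : -(δ + z.2) * ‖z.1‖ ^ 2 ≤ -δ * ‖z.1‖ ^ 2 := by
          nlinarith [mul_nonneg hz (sq_nonneg ‖z.1‖)]
        calc ‖a z.1‖ * (Real.exp (-(δ + z.2) * ‖z.1‖ ^ 2) * ‖m (‖z.1‖ ^ 2)‖)
            ≤ ‖z.1‖ * (Real.exp (-δ * ‖z.1‖ ^ 2) * 1) := by gcongr
          _ = _ := by ring
    have e1 : gradInt v w (fun r => Real.exp (-δ * r ^ 2) * (m (r ^ 2)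
        * ∫ u, Real.exp (-u * r ^ 2) ∂ν))
        = ∫ u, gradInt v w (fun r => Real.exp (-(δ + u) * r ^ 2) * m (r ^ 2)) ∂ν := by
      have := integral_integral_swap hH
      unfold gradInt
      simp only [H, a] at this
      rw [← this]
      congr 1
      ext ξ
      beta_reduce
      rw [← mul_assoc (Real.exp _), ← mul_assoc, ← integral_const_mul]
      congr 1
      ext u
      rw [show -(δ + u) * ‖ξ‖ ^ 2 = -δ * ‖ξ‖ ^ 2 + -u * ‖ξ‖ ^ 2 by ring, Real.exp_add]
      ring
    rw [e1, ← abs_of_nonneg (by positivity : 0 ≤ ‖w‖ ^ (n + 1)), ← abs_mul, ← integral_const_mul]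
    have := norm_integral_le_of_norm_le_const (μ := ν) (C := 1 + (n + 2).factorial)
      (f := fun u => ‖w‖ ^ (n + 1) * gradInt v w
        (fun r => Real.exp (-(δ + u) * r ^ 2) * m (r ^ 2)))
      (by filter_upwards [hν] with u hu
          rw [Real.norm_eq_abs, abs_mul, abs_of_nonneg (by positivity : 0 ≤ ‖w‖ ^ (n + 1))]
          exact hm.bound (δ + u) (by linarith) v w hv)
    simpa using this

lemma HasGradBound.laplace_pow {n : ℕ} (hn : 1 ≤ n) (ν : Measure ℝ) [IsProbabilityMeasure ν]
    (hν : ∀ᵐ u ∂ν, 0 ≤ u) (k : ℕ) :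
    HasGradBound n (fun r => (∫ u, Real.exp (-u * r) ∂ν) ^ k) := by
  induction k with
  | zero => simpa using hasGradBound_one hn
  | succ k ih => simpa only [pow_succ] using ih.mul_laplace hn ν hν

/-- The Lévy density of the `a`-stable subordinator integrated against `1 - e^{-vr}`. -/
def levyDensity (a r v : ℝ) : ℝ := (1 - Real.exp (-v * r)) * (a * v ^ (-(a + 1)))

lemma levyDensity_nonneg {a r v : ℝ} (ha : 0 < a) (hr : 0 ≤ r) (hv : 0 < v) :
    0 ≤ levyDensity a r v := by
  have : Real.exp (-v * r) ≤ 1 := Real.exp_le_one_iff.2 (by nlinarith [mul_nonneg hv.le hr])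
  have h2 : 0 ≤ 1 - Real.exp (-v * r) := by linarith
  unfold levyDensity
  positivity

lemma integrableOn_levyDensity {a r : ℝ} (ha : 0 < a) (ha1 : a < 1) (hr : 0 ≤ r) :
    IntegrableOn (levyDensity a r) (Ioi 0) := by
  have hm : Measurable (levyDensity a r) := by unfold levyDensity; fun_prop
  rw [← Ioc_union_Ioi_eq_Ioi (zero_le_one : (0:ℝ) ≤ 1)]
  refine IntegrableOn.union ?_ ?_
  · have h1 : IntegrableOn (fun v : ℝ => r * a * v ^ (-a)) (Ioc 0 1) := by
      have := (intervalIntegral.intervalIntegrable_rpow' (a := 0) (b := 1) (r := -a) (by linarith))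
      rw [intervalIntegrable_iff_integrableOn_Ioc_of_le zero_le_one] at this
      exact this.const_mul _
    refine Integrable.mono' h1 hm.aestronglyMeasurable ?_
    filter_upwards [ae_restrict_mem measurableSet_Ioc] with v hv
    rw [Real.norm_eq_abs, abs_of_nonneg (levyDensity_nonneg ha hr hv.1)]
    have h2 : 1 - Real.exp (-v * r) ≤ v * r := by linarith [Real.add_one_le_exp (-v * r)]
    have h3 : v ^ (-a) = v * v ^ (-(a + 1)) := by
      rw [show -a = 1 + -(a + 1) by ring, Real.rpow_add hv.1, Real.rpow_one]
    have h4 : 0 ≤ v ^ (-(a + 1)) := Real.rpow_nonneg hv.1.le _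
    unfold levyDensity
    rw [h3]
    calc (1 - Real.exp (-v * r)) * (a * v ^ (-(a + 1)))
        ≤ (v * r) * (a * v ^ (-(a + 1))) := by gcongr
      _ = _ := by ring
  · have h1 : IntegrableOn (fun v : ℝ => a * v ^ (-(a + 1))) (Ioi 1) :=
      (integrableOn_Ioi_rpow_of_lt (by linarith) zero_lt_one).const_mul _
    refine Integrable.mono' h1 hm.aestronglyMeasurable ?_
    filter_upwards [ae_restrict_mem measurableSet_Ioi] with v hv
    have hv0 : 0 < v := lt_trans zero_lt_one hv
    rw [Real.norm_eq_abs, abs_of_nonneg (levyDensity_nonneg ha hr hv0)]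
    have h4 : 0 ≤ v ^ (-(a + 1)) := Real.rpow_nonneg hv0.le _
    unfold levyDensity
    calc (1 - Real.exp (-v * r)) * (a * v ^ (-(a + 1)))
        ≤ 1 * (a * v ^ (-(a + 1))) := by gcongr; linarith [Real.exp_pos (-v * r)]
      _ = _ := by ring

lemma integral_levyDensity_one_pos {a : ℝ} (ha : 0 < a) (ha1 : a < 1) :
    0 < ∫ v in Ioi 0, levyDensity a 1 v := by
  rw [setIntegral_pos_iff_support_of_nonneg_ae]
  · have : Ioi (0:ℝ) ⊆ Function.support (levyDensity a 1) ∩ Ioi 0 := by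
      intro v hv
      refine ⟨?_, hv⟩
      have hv : 0 < v := hv
      have h1 : Real.exp (-v * 1) < 1 := by rw [Real.exp_lt_one_iff]; linarith
      have h2 : 0 < 1 - Real.exp (-v * 1) := by linarith
      have : 0 < levyDensity a 1 v := by unfold levyDensity; positivity
      exact this.ne'
    exact lt_of_lt_of_le (by simp) (measure_mono this)
  · filter_upwards [ae_restrict_mem measurableSet_Ioi] with v hv
    exact levyDensity_nonneg ha zero_le_one hv
  · exact integrableOn_levyDensity ha ha1 zero_le_one

lemma integral_levyDensity {a r : ℝ} (ha : 0 < a) (hr : 0 ≤ r) :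
    ∫ v in Ioi 0, levyDensity a r v = r ^ a * ∫ v in Ioi 0, levyDensity a 1 v := by
  rcases hr.eq_or_lt with rfl | hr
  · simp [levyDensity, Real.zero_rpow ha.ne']
  · have h := integral_comp_mul_left_Ioi (levyDensity a 1) 0 hr
    rw [mul_zero, smul_eq_mul] at h
    have h2 : ∫ v in Ioi 0, levyDensity a 1 (r * v)
        = r ^ (-(a + 1)) * ∫ v in Ioi 0, levyDensity a r v := by
      rw [← integral_const_mul]
      refine setIntegral_congr_fun measurableSet_Ioi fun v hv => ?_
      have hv : 0 < v := hv
      simp only [levyDensity]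
      rw [Real.mul_rpow hr.le hv.le, show -(r * v) * 1 = -v * r by ring]
      ring
    rw [h2] at h
    have h3 : r ^ a * r ^ (-(a + 1)) = r⁻¹ := by
      rw [← Real.rpow_add hr, show a + -(a + 1) = -1 by ring, Real.rpow_neg_one]
    have h4 : r ^ (a + 1) * r ^ (-(a + 1)) = 1 := by
      rw [← Real.rpow_add hr, add_neg_cancel, Real.rpow_zero]
    have h5 : r ^ (a + 1) * r⁻¹ = r ^ a := by
      rw [Real.rpow_add hr, Real.rpow_one]; field_simp
    calc ∫ v in Ioi 0, levyDensity a r v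
        = r ^ (a + 1) * (r ^ (-(a + 1)) * ∫ v in Ioi 0, levyDensity a r v) := by
          rw [← mul_assoc, h4, one_mul]
      _ = _ := by rw [h, ← mul_assoc, h5]

lemma laplace_pareto {a r ε : ℝ} (ha : 0 < a) (hr : 0 ≤ r) (hε : 0 < ε) :
    ∫ u, Real.exp (-u * r) ∂(ProbabilityTheory.paretoMeasure ε a)
      = 1 - ε ^ a * ∫ v in Ioi ε, levyDensity a r v := by
  have hP := ProbabilityTheory.isProbabilityMeasure_paretoMeasure hε ha
  have hform (g : ℝ → ℝ) : ∫ u, g u ∂(ProbabilityTheory.paretoMeasure ε a)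
      = ∫ v in Ioi ε, a * ε ^ a * v ^ (-(a + 1)) * g v := by
    have hm : Measurable (ProbabilityTheory.paretoPDF ε a) :=
      (ProbabilityTheory.measurable_paretoPDFReal ε a).ennreal_ofReal
    rw [ProbabilityTheory.paretoMeasure, integral_withDensity_eq_integral_toReal_smul hm
      (Eventually.of_forall fun x => ENNReal.ofReal_lt_top), ← integral_Ici_eq_integral_Ioi,
      ← integral_indicator measurableSet_Ici]
    congr 1
    ext v
    rw [ProbabilityTheory.paretoPDF,
      ENNReal.toReal_ofReal (ProbabilityTheory.paretoPDFReal_nonneg hε.le ha.le v)]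
    simp only [ProbabilityTheory.paretoPDFReal, indicator, mem_Ici, smul_eq_mul]
    split_ifs <;> simp
  have hmass := hform (fun _ => 1)
  simp only [integral_const, probReal_univ, smul_eq_mul, mul_one] at hmass
  have hI1 : IntegrableOn (fun v : ℝ => a * ε ^ a * v ^ (-(a + 1))) (Ioi ε) :=
    (integrableOn_Ioi_rpow_of_lt (by linarith) hε).const_mul _
  have hI2 : IntegrableOn (fun v : ℝ => a * ε ^ a * v ^ (-(a + 1)) * Real.exp (-v * r)) (Ioi ε) := by
    refine Integrable.mono' hI1 (by fun_prop) ?_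
    filter_upwards [ae_restrict_mem measurableSet_Ioi] with v hv
    have hv0 : 0 < v := hε.trans hv
    rw [norm_mul, Real.norm_eq_abs (Real.exp _), Real.abs_exp, Real.norm_eq_abs,
      abs_of_nonneg (by positivity)]
    exact mul_le_of_le_one_right (by positivity)
      (Real.exp_le_one_iff.2 (by nlinarith [mul_nonneg hv0.le hr]))
  have hdiff : ε ^ a * ∫ v in Ioi ε, levyDensity a r v
      = (∫ v in Ioi ε, a * ε ^ a * v ^ (-(a + 1)))
        - ∫ v in Ioi ε, a * ε ^ a * v ^ (-(a + 1)) * Real.exp (-v * r) := by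
    rw [← integral_const_mul, ← integral_sub hI1 hI2]
    refine setIntegral_congr_fun measurableSet_Ioi fun v hv => ?_
    simp only [levyDensity]
    ring
  rw [hform, hdiff, ← hmass]
  ring

lemma ae_paretoMeasure_nonneg {a ε : ℝ} (hε : 0 < ε) :
    ∀ᵐ u ∂(ProbabilityTheory.paretoMeasure ε a), 0 ≤ u := by
  have hm : Measurable (ProbabilityTheory.paretoPDF ε a) :=
      (ProbabilityTheory.measurable_paretoPDFReal ε a).ennreal_ofReal
  rw [ProbabilityTheory.paretoMeasure, ae_withDensity_iff hm]
  refine Eventually.of_forall fun u hu => ?_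
  by_contra! h
  exact hu (ProbabilityTheory.paretoPDF_of_lt (h.trans hε))

lemma hasGradBound_stable {n : ℕ} (hn : 1 ≤ n) {a t : ℝ} (ha : 0 < a) (ha1 : a < 1) (ht : 0 < t) :
    HasGradBound n (fun r => Real.exp (-t * r ^ a)) := by
  set c := ∫ v in Ioi 0, levyDensity a 1 v with hc
  have hc0 : 0 < c := integral_levyDensity_one_pos ha ha1
  let ε : ℕ → ℝ := fun k => (t / (c * (k + 1))) ^ (1 / a)
  have hε (k : ℕ) : 0 < ε k := by positivity
  have hεa (k : ℕ) : ε k ^ a = t / (c * (k + 1)) := by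
    rw [← Real.rpow_mul (by positivity), one_div_mul_cancel ha.ne', Real.rpow_one]
  have hε0 : Tendsto ε atTop (𝓝 0) := by
    have h1 : Tendsto (fun k : ℕ => t / (c * ((k:ℝ) + 1))) atTop (𝓝 0) := by
      refine Tendsto.const_div_atTop ?_ _
      exact (tendsto_atTop_add_const_right _ _ tendsto_natCast_atTop_atTop).const_mul_atTop hc0
    have := h1.rpow_const (p := 1 / a) (Or.inr (by positivity))
    rwa [Real.zero_rpow (by positivity)] at this
  have hP (k : ℕ) := ProbabilityTheory.isProbabilityMeasure_paretoMeasure (hε k) ha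
  refine HasGradBound.of_tendsto hn
    (f := fun k r => (∫ u, Real.exp (-u * r) ∂(ProbabilityTheory.paretoMeasure (ε k) a)) ^ k)
    (fun k => HasGradBound.laplace_pow hn _ (ae_paretoMeasure_nonneg (hε k)) k) (by fun_prop) ?_
  intro r hr
  have hJ : Tendsto (fun k => ∫ v in Ioi (ε k), levyDensity a r v) atTop (𝓝 (r ^ a * c)) := by
    rw [hc, ← integral_levyDensity ha hr, ← integral_indicator measurableSet_Ioi]
    simp_rw [← integral_indicator measurableSet_Ioi]
    have hI := integrableOn_levyDensity ha ha1 hr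
    refine tendsto_integral_of_dominated_convergence ((Ioi 0).indicator (levyDensity a r)) ?_
      ((integrable_indicator_iff measurableSet_Ioi).2 hI) ?_ ?_
    · intro k
      exact ((integrable_indicator_iff measurableSet_Ioi).2
        (hI.mono_set (Ioi_subset_Ioi (hε k).le))).aestronglyMeasurable
    · intro k
      refine Eventually.of_forall fun v => ?_
      by_cases hv : v ∈ Ioi (ε k)
      · have hv0 : v ∈ Ioi (0:ℝ) := (hε k).trans hv
        rw [indicator_of_mem hv, indicator_of_mem hv0, Real.norm_eq_abs,
          abs_of_nonneg (levyDensity_nonneg ha hr hv0)]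
      · rw [indicator_of_notMem hv, norm_zero]
        exact indicator_nonneg (fun v hv => levyDensity_nonneg ha hr hv) _
    · refine Eventually.of_forall fun v => ?_
      by_cases hv : v ∈ Ioi (0:ℝ)
      · refine tendsto_const_nhds.congr' ?_
        filter_upwards [hε0.eventually_lt_const hv] with k hk
        rw [indicator_of_mem hv, indicator_of_mem (s := Ioi (ε k)) hk]
      · rw [indicator_of_notMem hv]
        refine tendsto_const_nhds.congr fun k => ?_
        rw [indicator_of_notMem (s := Ioi (ε k)) fun h => hv ((hε k).trans h)]
  have hg : Tendsto (fun k : ℕ => (k:ℝ) * (-(ε k ^ a * ∫ v in Ioi (ε k), levyDensity a r v)))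
      atTop (𝓝 (-t * r ^ a)) := by
    have h1 := ((tendsto_natCast_div_add_atTop (1:ℝ)).mul hJ).const_mul (-(t / c))
    have e : -(t / c) * (1 * (r ^ a * c)) = -t * r ^ a := by field_simp
    rw [e] at h1
    refine h1.congr fun k => ?_
    rw [hεa]
    have : (k:ℝ) + 1 ≠ 0 := by positivity
    field_simp
  refine (Real.tendsto_one_add_pow_exp_of_tendsto hg).congr fun k => ?_
  rw [laplace_pareto ha hr (hε k), sub_eq_add_neg]

/-- Gradient bound for the fractional heat multiplier, uniform in time. -/
lemma hasGradBound_fractional {n : ℕ} (hn : 1 ≤ n) {a t : ℝ} (ha : 0 < a) (ha1 : a ≤ 1)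
    (ht : 0 < t) : HasGradBound n (fun r => Real.exp (-t * r ^ a)) := by
  rcases ha1.lt_or_eq with h | rfl
  · exact hasGradBound_stable hn ha h ht
  · have := HasGradBound.mul_laplace hn (hasGradBound_one hn) (Measure.dirac t)
      ((ae_dirac_iff measurableSet_Ici).2 ht.le)
    simpa using this

lemma norm_pow_mul_gradInt_le {n : ℕ} (hn : 1 ≤ n) {α t : ℝ} (hα : 0 < α) (hα1 : α ≤ 1)
    (ht : 0 < t) {v : Rn n} (hv : ‖v‖ ≤ 1) (w : Rn n) :
    ‖w‖ ^ (n + 1) * |gradInt v w (fun r => Real.exp (-t * r ^ (2 * α)))|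
      ≤ 1 + (n + 2).factorial := by
  have hm := hasGradBound_fractional hn hα hα1 ht
  have he (r : ℝ) (hr : 0 ≤ r) : (r ^ 2) ^ α = r ^ (2 * α) := by
    rw [← Real.rpow_natCast_mul hr]; norm_num
  have hlim := tendsto_gradInt (n := n) hv w
    (f := fun k r => Real.exp (-(1 / ((k:ℝ) + 1)) * r ^ 2) * Real.exp (-t * (r ^ 2) ^ α))
    (g := fun r => Real.exp (-t * r ^ (2 * α))) (b := fun r => Real.exp (-t * r ^ (2 * α)))
    (fun k => by fun_prop)
    (by simpa using integrable_radial_stretched_exp (n := n) hn zero_le_one ht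
          (by positivity : 0 < 2 * α))
    (fun k r hr => by
      rw [abs_mul, Real.abs_exp, Real.abs_exp, he r hr]
      refine mul_le_of_le_one_left (Real.exp_pos _).le (Real.exp_le_one_iff.2 ?_)
      have : 0 ≤ 1 / ((k:ℝ) + 1) * r ^ 2 := by positivity
      linarith)
    (fun r hr => by
      simp only [he r hr]
      have h1 : Tendsto (fun k : ℕ => -(1 / ((k:ℝ) + 1)) * r ^ 2) atTop (𝓝 (-0 * r ^ 2)) :=
        (tendsto_one_div_add_atTop_nhds_zero_nat.neg).mul_const _
      have := (Real.continuous_exp.tendsto _).comp h1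
      simpa using this.mul_const (Real.exp (-t * r ^ (2 * α))))
  exact le_of_tendsto (hlim.abs.const_mul _) (Eventually.of_forall fun k =>
    hm.bound _ (by positivity) v w hv)

/-- Pointwise bounds for the gradient of the fractional heat kernel. -/
lemma exists_dKer_bounds {n : ℕ} (hn : 1 ≤ n) {α : ℝ} (hα : 0 < α) (hα1 : α ≤ 1) :
    ∃ C > (0:ℝ), ∀ t > 0, ∀ (j : Fin n) (w : Rn n),
      ‖w‖ ^ (n + 1) * |dKer n α t j w| ≤ C ∧
      |dKer n α t j w| ≤ C * t ^ (-(((n:ℝ) + 1) / (2 * α))) := by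
  set I : ℝ := ∫ ξ : Rn n, ‖ξ‖ * Real.exp (-1 * ‖ξ‖ ^ (2 * α)) with hI
  have hI0 : 0 ≤ I := integral_nonneg fun ξ => by positivity
  have h2α : 0 < 2 * α := by linarith
  have hpi := Real.pi_pos
  refine ⟨2 * Real.pi * (1 + (n + 2).factorial) + 2 * Real.pi * I, by positivity, ?_⟩
  intro t ht j w
  have i0 : Integrable (fun ξ : Rn n => Real.exp (-t * ‖ξ‖ ^ (2 * α))) := by
    simpa using integrable_radial_stretched_exp (n := n) hn le_rfl ht h2α
  have i1 (s : ℝ) (hs : 0 < s) :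
      Integrable (fun ξ : Rn n => ‖ξ‖ * Real.exp (-s * ‖ξ‖ ^ (2 * α))) := by
    simpa using integrable_radial_stretched_exp (n := n) hn zero_le_one hs h2α
  have hv : ‖(EuclideanSpace.single j 1 : Rn n)‖ ≤ 1 := by simp
  have e : dKer n α t j w = -(2 * Real.pi) *
      gradInt (EuclideanSpace.single j 1) w (fun r => Real.exp (-t * r ^ (2 * α))) :=
    fderiv_re_fourierInv i0 (i1 t ht) w _
  have e' : |dKer n α t j w| = (2 * Real.pi) *
      |gradInt (EuclideanSpace.single j 1) w (fun r => Real.exp (-t * r ^ (2 * α)))| := by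
    rw [e, abs_mul, abs_neg, abs_of_pos (by positivity : 0 < 2 * Real.pi)]
  constructor
  · have := norm_pow_mul_gradInt_le hn hα hα1 ht hv w
    rw [e']
    have h2 : 0 ≤ 2 * Real.pi * I := by positivity
    nlinarith
  · have hs : (0:ℝ) < t ^ (1 / (2 * α)) := by positivity
    have hsc : ∫ ξ : Rn n, ‖ξ‖ * Real.exp (-t * ‖ξ‖ ^ (2 * α))
        = t ^ (-(((n:ℝ) + 1) / (2 * α))) * I := by
      have := Measure.integral_comp_smul (volume : Measure (Rn n))
        (fun ξ => ‖ξ‖ * Real.exp (-1 * ‖ξ‖ ^ (2 * α))) (t ^ (1 / (2 * α)))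
      rw [← hI] at this
      simp only [norm_smul, Real.norm_eq_abs, abs_of_pos hs, smul_eq_mul,
        finrank_euclideanSpace, Fintype.card_fin] at this
      have e3 (ξ : Rn n) : t ^ (1 / (2 * α)) * ‖ξ‖
          * Real.exp (-1 * (t ^ (1 / (2 * α)) * ‖ξ‖) ^ (2 * α))
          = t ^ (1 / (2 * α)) * (‖ξ‖ * Real.exp (-t * ‖ξ‖ ^ (2 * α))) := by
        rw [Real.mul_rpow hs.le (norm_nonneg _), ← Real.rpow_mul ht.le,
          one_div_mul_cancel h2α.ne', Real.rpow_one]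
        ring_nf
      simp only [e3] at this
      rw [integral_const_mul, abs_of_pos (by positivity), ← Real.rpow_natCast,
        ← Real.rpow_mul ht.le, ← Real.rpow_neg ht.le] at this
      have e4 : t ^ (-(((n:ℝ) + 1) / (2 * α)))
          = (t ^ (1 / (2 * α)))⁻¹ * t ^ (-(1 / (2 * α) * (n:ℝ))) := by
        rw [← Real.rpow_neg ht.le, ← Real.rpow_add ht]
        congr 1
        field_simp
        ring
      rw [e4, mul_assoc, ← this, inv_mul_cancel_left₀ hs.ne']
    have hle : |gradInt (EuclideanSpace.single j 1) w (fun r => Real.exp (-t * r ^ (2 * α)))|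
        ≤ t ^ (-(((n:ℝ) + 1) / (2 * α))) * I := by
      rw [← hsc]
      unfold gradInt
      rw [← Real.norm_eq_abs]
      refine norm_integral_le_of_norm_le (i1 t ht) (Eventually.of_forall fun ξ => ?_)
      rw [norm_mul, Real.norm_eq_abs (Real.exp _), Real.abs_exp]
      gcongr
      exact norm_inner_mul_sin_le hv w ξ
    rw [e']
    have h2 : 0 ≤ t ^ (-(((n:ℝ) + 1) / (2 * α))) := by positivity
    have h3 : 0 ≤ 2 * Real.pi * (1 + ((n + 2).factorial : ℝ)) := by positivity
    calc _ ≤ 2 * Real.pi * (t ^ (-(((n:ℝ) + 1) / (2 * α))) * I) := by gcongr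
      _ ≤ _ := by nlinarith

/-- Volume of the unit ball of `ℝ^n`. -/
def unitVol (n : ℕ) : ℝ := (volume (Metric.closedBall (0 : Rn n) 1)).toReal

lemma unitVol_nonneg (n : ℕ) : 0 ≤ unitVol n := ENNReal.toReal_nonneg

lemma volume_closedBall_eq {n : ℕ} (x : Rn n) {r : ℝ} (hr : 0 ≤ r) :
    volume (Metric.closedBall x r) = ENNReal.ofReal (r ^ n * unitVol n) := by
  rw [Measure.addHaar_closedBall' volume x hr, ENNReal.ofReal_mul (by positivity), unitVol,
    ENNReal.ofReal_toReal measure_closedBall_lt_top.ne]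
  simp

/-- A slightly sub-normalised average of `f` over a closed ball. -/
def ballAvg {n : ℕ} (f : Rn n → ℝ≥0∞) (x : Rn n) (r : ℝ) : ℝ≥0∞ :=
  ENNReal.ofReal ((1 + unitVol n)⁻¹ / r ^ n) * ∫⁻ y in Metric.closedBall x r, f y

/-- The dyadic-radius centred Hardy–Littlewood maximal function. -/
def hlMax {n : ℕ} (f : Rn n → ℝ≥0∞) (x : Rn n) : ℝ≥0∞ := ⨆ k : ℤ, ballAvg f x ((2:ℝ) ^ k)

lemma ballAvg_mono {n : ℕ} {f g : Rn n → ℝ≥0∞} (h : ∀ y, f y ≤ g y) (x : Rn n) (r : ℝ) :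
    ballAvg f x r ≤ ballAvg g x r := by
  unfold ballAvg
  gcongr
  exact h _

lemma ballAvg_add {n : ℕ} {f g : Rn n → ℝ≥0∞} (hf : Measurable f) (x : Rn n) (r : ℝ) :
    ballAvg (fun y => f y + g y) x r = ballAvg f x r + ballAvg g x r := by
  unfold ballAvg
  rw [lintegral_add_left hf, mul_add]

lemma ballAvg_const_le {n : ℕ} (a : ℝ≥0∞) (x : Rn n) {r : ℝ} (hr : 0 < r) :
    ballAvg (fun _ => a) x r ≤ a := by
  unfold ballAvg
  have hv := unitVol_nonneg n
  rw [lintegral_const, Measure.restrict_apply_univ, volume_closedBall_eq x hr.le, mul_left_comm,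
    ← ENNReal.ofReal_mul (by positivity)]
  refine mul_le_of_le_one_right' (ENNReal.ofReal_le_one.2 ?_)
  have : (1 + unitVol n)⁻¹ / r ^ n * (r ^ n * unitVol n) = unitVol n / (1 + unitVol n) := by
    field_simp
  rw [this, div_le_one (by positivity)]
  linarith

lemma ballAvg_const_mul {n : ℕ} (c : ℝ≥0∞) {f : Rn n → ℝ≥0∞} (hf : Measurable f) (x : Rn n)
    (r : ℝ) : ballAvg (fun y => c * f y) x r = c * ballAvg f x r := by
  unfold ballAvg
  rw [lintegral_const_mul _ hf, mul_left_comm]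

lemma ballAvg_congr_on {n : ℕ} {f g : Rn n → ℝ≥0∞} {x : Rn n} {r : ℝ}
    (h : ∀ y ∈ Metric.closedBall x r, f y ≤ g y) : ballAvg f x r ≤ ballAvg g x r := by
  unfold ballAvg
  exact mul_le_mul' le_rfl (setLIntegral_mono' measurableSet_closedBall h)

lemma ballAvg_le {n : ℕ} (f : Rn n → ℝ≥0∞) (x : Rn n) {r : ℝ} (hr : 0 < r) :
    ballAvg f x r ≤ ENNReal.ofReal (1 / r ^ n) * ∫⁻ y, f y := by
  unfold ballAvg
  have hv := unitVol_nonneg n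
  gcongr
  · exact inv_le_one_of_one_le₀ (by linarith)
  · exact Measure.restrict_le_self

lemma measurable_ballAvg {n : ℕ} {f : Rn n → ℝ≥0∞} (hf : Measurable f) (r : ℝ) :
    Measurable (fun x => ballAvg f x r) := by
  unfold ballAvg
  refine Measurable.const_mul ?_ _
  have h : Measurable (fun z : Rn n × Rn n =>
      {z : Rn n × Rn n | dist z.2 z.1 ≤ r}.indicator (fun z => f z.2) z) :=
    (hf.comp measurable_snd).indicator
      (measurableSet_le (measurable_snd.dist measurable_fst) measurable_const)
  have := h.lintegral_prod_right' (ν := (volume : Measure (Rn n)))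
  have e : (fun x => ∫⁻ y in Metric.closedBall x r, f y) = fun x => ∫⁻ y,
      {z : Rn n × Rn n | dist z.2 z.1 ≤ r}.indicator (fun z => f z.2) (x, y) := by
    ext x
    rw [← lintegral_indicator measurableSet_closedBall]
    rfl
  rw [e]
  exact this

lemma measurable_hlMax {n : ℕ} {f : Rn n → ℝ≥0∞} (hf : Measurable f) : Measurable (hlMax f) :=
  Measurable.iSup fun _ => measurable_ballAvg hf _

lemma hlMax_mono {n : ℕ} {f g : Rn n → ℝ≥0∞} (h : ∀ y, f y ≤ g y) (x : Rn n) :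
    hlMax f x ≤ hlMax g x := iSup_mono fun _ => ballAvg_mono h _ _

lemma hlMax_add_le {n : ℕ} {f g : Rn n → ℝ≥0∞} (hf : Measurable f) (x : Rn n) :
    hlMax (fun y => f y + g y) x ≤ hlMax f x + hlMax g x := by
  refine iSup_le fun k => ?_
  rw [ballAvg_add hf]
  exact add_le_add (le_iSup (fun k : ℤ => ballAvg f x ((2:ℝ) ^ k)) k)
    (le_iSup (fun k : ℤ => ballAvg g x ((2:ℝ) ^ k)) k)

lemma hlMax_le_of_le {n : ℕ} {f : Rn n → ℝ≥0∞} {a : ℝ≥0∞} (h : ∀ y, f y ≤ a) (x : Rn n) :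
    hlMax f x ≤ a :=
  iSup_le fun _ => (ballAvg_mono h _ _).trans (ballAvg_const_le _ _ (by positivity))

lemma setLIntegral_closedBall_le {n : ℕ} (f : Rn n → ℝ≥0∞) (x : Rn n) {r : ℝ} (hr : 0 < r) :
    ∫⁻ y in Metric.closedBall x r, f y
      ≤ ENNReal.ofReal (2 ^ n * (1 + unitVol n) * r ^ n) * hlMax f x := by
  have hv := unitVol_nonneg n
  obtain ⟨k, hk1, hk2⟩ := exists_mem_Ioc_zpow hr (one_lt_two : (1:ℝ) < 2)
  have h2k : (2:ℝ) ^ (k + 1) ≤ 2 * r := by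
    rw [zpow_add_one₀ two_ne_zero]; linarith
  have hpos : (0:ℝ) < 2 ^ (k + 1) := by positivity
  have h1 : ∫⁻ y in Metric.closedBall x r, f y
      ≤ ∫⁻ y in Metric.closedBall x ((2:ℝ) ^ (k + 1)), f y :=
    lintegral_mono_set (Metric.closedBall_subset_closedBall hk2)
  have h2 : ∫⁻ y in Metric.closedBall x ((2:ℝ) ^ (k + 1)), f y
      = ENNReal.ofReal ((1 + unitVol n) * (2 ^ (k + 1)) ^ n) * ballAvg f x ((2:ℝ) ^ (k + 1)) := by
    unfold ballAvg
    rw [← mul_assoc, ← ENNReal.ofReal_mul (by positivity)]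
    have : (1 + unitVol n) * ((2:ℝ) ^ (k + 1)) ^ n * ((1 + unitVol n)⁻¹ / (2 ^ (k + 1)) ^ n) = 1 := by
      field_simp
    rw [this, ENNReal.ofReal_one, one_mul]
  rw [h2] at h1
  refine h1.trans ?_
  have h3 : (1 + unitVol n) * ((2:ℝ) ^ (k + 1)) ^ n ≤ 2 ^ n * (1 + unitVol n) * r ^ n := by
    calc (1 + unitVol n) * ((2:ℝ) ^ (k + 1)) ^ n ≤ (1 + unitVol n) * (2 * r) ^ n := by gcongr
      _ = _ := by rw [mul_pow]; ring
  gcongr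
  exact le_iSup (fun k : ℤ => ballAvg f x ((2:ℝ) ^ k)) (k + 1)

/-- Weak type `(1,1)` bound, by Vitali's covering lemma. -/
lemma volume_lt_hlMax_le {n : ℕ} (hn : 1 ≤ n) (f : Rn n → ℝ≥0∞) {l : ℝ} (hl : 0 < l) :
    volume {x | ENNReal.ofReal l < hlMax f x} ≤ ENNReal.ofReal (5 ^ n / l) * ∫⁻ y, f y := by
  have hv := unitVol_nonneg n
  by_cases hI : ∫⁻ y, f y = ∞
  · rw [hI, ENNReal.mul_top (ENNReal.ofReal_pos.2 (by positivity)).ne']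
    exact le_top
  set I := (∫⁻ y, f y).toReal with hIdef
  have hIe : ∫⁻ y, f y = ENNReal.ofReal I := (ENNReal.ofReal_toReal hI).symm
  let t : Set (Rn n × ℤ) := {b | ENNReal.ofReal l < ballAvg f b.1 ((2:ℝ) ^ b.2)}
  have hball : ∀ b ∈ t, volume (Metric.closedBall b.1 ((2:ℝ) ^ b.2))
      ≤ ENNReal.ofReal (1 / l) * ∫⁻ y in Metric.closedBall b.1 ((2:ℝ) ^ b.2), f y := by
    intro b hb
    have hr : (0:ℝ) < 2 ^ b.2 := by positivity
    rw [volume_closedBall_eq _ hr.le]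
    have h1 : ENNReal.ofReal ((2 ^ b.2) ^ n * unitVol n)
        = ENNReal.ofReal ((2 ^ b.2) ^ n * unitVol n / l) * ENNReal.ofReal l := by
      rw [← ENNReal.ofReal_mul (by positivity), div_mul_cancel₀ _ hl.ne']
    rw [h1]
    refine (mul_le_mul_right (le_of_lt hb) _).trans ?_
    unfold ballAvg
    rw [← mul_assoc, ← ENNReal.ofReal_mul (by positivity)]
    gcongr
    have : ((2:ℝ) ^ b.2) ^ n * unitVol n / l * ((1 + unitVol n)⁻¹ / (2 ^ b.2) ^ n)
        = (unitVol n / (1 + unitVol n)) * (1 / l) := by field_simp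
    rw [this]
    refine mul_le_of_le_one_left (by positivity) ?_
    rw [div_le_one (by positivity)]
    linarith
  have hrad : ∀ b ∈ t, (2:ℝ) ^ b.2 ≤ max 1 (I / l) := by
    intro b hb
    have hr : (0:ℝ) < 2 ^ b.2 := by positivity
    have h1 : ENNReal.ofReal l < ENNReal.ofReal (1 / (2 ^ b.2) ^ n * I) := by
      rw [ENNReal.ofReal_mul (by positivity), ← hIe]
      exact lt_of_lt_of_le hb (ballAvg_le f b.1 hr)
    have h2 := (ENNReal.ofReal_lt_ofReal_iff_of_nonneg hl.le).1 h1
    rcases le_or_gt ((2:ℝ) ^ b.2) 1 with h | h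
    · exact h.trans (le_max_left _ _)
    · refine le_trans ?_ (le_max_right _ _)
      have h3 : (2:ℝ) ^ b.2 ≤ (2 ^ b.2) ^ n := le_self_pow₀ h.le (by omega)
      rw [div_mul_eq_mul_div, one_mul, lt_div_iff₀ (by positivity)] at h2
      rw [le_div_iff₀ hl]
      nlinarith
  obtain ⟨u, hut, hdisj, hcov⟩ := Vitali.exists_disjoint_subfamily_covering_enlargement_closedBall
    t (fun b => b.1) (fun b => (2:ℝ) ^ b.2) _ hrad 5 (by norm_num)
  have hcount : u.Countable := hdisj.countable_of_nonempty_interior fun b _ => by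
    have hr : (0:ℝ) < 2 ^ b.2 := by positivity
    exact ⟨b.1, Metric.ball_subset_interior_closedBall (Metric.mem_ball_self hr)⟩
  have hsub : {x | ENNReal.ofReal l < hlMax f x}
      ⊆ ⋃ b ∈ u, Metric.closedBall b.1 (5 * (2:ℝ) ^ b.2) := by
    intro x hx
    have hx : ENNReal.ofReal l < ⨆ k : ℤ, ballAvg f x ((2:ℝ) ^ k) := hx
    obtain ⟨k, hk⟩ := lt_iSup_iff.1 hx
    obtain ⟨b, hb, hbs⟩ := hcov (x, k) hk
    exact mem_biUnion hb (hbs (Metric.mem_closedBall_self (by positivity)))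
  calc volume {x | ENNReal.ofReal l < hlMax f x}
      ≤ volume (⋃ b ∈ u, Metric.closedBall b.1 (5 * (2:ℝ) ^ b.2)) := measure_mono hsub
    _ ≤ ∑' b : u, volume (Metric.closedBall b.1.1 (5 * (2:ℝ) ^ b.1.2)) :=
        measure_biUnion_le _ hcount _
    _ ≤ ∑' b : u, ENNReal.ofReal (5 ^ n / l)
          * ∫⁻ y in Metric.closedBall b.1.1 ((2:ℝ) ^ b.1.2), f y := by
        refine ENNReal.tsum_le_tsum fun b => ?_
        have hr : (0:ℝ) < 2 ^ b.1.2 := by positivity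
        have h5 : volume (Metric.closedBall b.1.1 (5 * (2:ℝ) ^ b.1.2))
            = ENNReal.ofReal (5 ^ n) * volume (Metric.closedBall b.1.1 ((2:ℝ) ^ b.1.2)) := by
          rw [volume_closedBall_eq _ (by positivity), volume_closedBall_eq _ hr.le,
            ← ENNReal.ofReal_mul (by positivity), mul_pow, mul_assoc]
        rw [h5, div_eq_mul_one_div, ENNReal.ofReal_mul (by positivity), mul_assoc]
        gcongr
        exact hball _ (hut b.2)
    _ = ENNReal.ofReal (5 ^ n / l)
          * ∫⁻ y in ⋃ b ∈ u, Metric.closedBall b.1 ((2:ℝ) ^ b.2), f y := by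
        rw [ENNReal.tsum_mul_left, lintegral_biUnion hcount (fun b _ => measurableSet_closedBall)
          hdisj]
    _ ≤ _ := by
        gcongr
        exact Measure.restrict_le_self

lemma volume_lt_hlMax_le' {n : ℕ} (hn : 1 ≤ n) {f : Rn n → ℝ≥0∞} (hf : Measurable f) {l : ℝ}
    (hl : 0 < l) :
    volume {x | ENNReal.ofReal l < hlMax f x}
      ≤ ENNReal.ofReal (2 * 5 ^ n / l)
        * ∫⁻ y, {y | ENNReal.ofReal l < 2 * f y}.indicator f y := by
  have hs : MeasurableSet {y | ENNReal.ofReal l < 2 * f y} :=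
    measurableSet_lt measurable_const (hf.const_mul _)
  have h2 : ENNReal.ofReal l = ENNReal.ofReal (l / 2) + ENNReal.ofReal (l / 2) := by
    rw [← ENNReal.ofReal_add (by positivity) (by positivity), add_halves]
  have hsub : {x | ENNReal.ofReal l < hlMax f x} ⊆ {x | ENNReal.ofReal (l / 2)
      < hlMax ({y | ENNReal.ofReal l < 2 * f y}.indicator f) x} := by
    intro x hx
    have hx : ENNReal.ofReal l < hlMax f x := hx
    have h1 : hlMax f x ≤ hlMax ({y | ENNReal.ofReal l < 2 * f y}.indicator f) x
        + ENNReal.ofReal (l / 2) := by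
      refine (hlMax_mono (g := fun y => {y | ENNReal.ofReal l < 2 * f y}.indicator f y
        + ENNReal.ofReal (l / 2)) (fun y => ?_) x).trans ((hlMax_add_le (hf.indicator hs) x).trans
          (by gcongr; exact hlMax_le_of_le (fun _ => le_rfl) x))
      by_cases hy : ENNReal.ofReal l < 2 * f y
      · rw [indicator_of_mem (s := {y | ENNReal.ofReal l < 2 * f y}) hy]
        exact le_self_add
      · refine le_trans ?_ le_add_self
        rw [not_lt, h2, ← two_mul] at hy
        exact (ENNReal.mul_le_mul_iff_right (by simp) (by simp)).1 hy
    have h3 := lt_of_lt_of_le hx h1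
    exact lt_of_add_lt_add_right (h2.symm.trans_lt h3)
  refine (measure_mono hsub).trans ((volume_lt_hlMax_le hn _ (half_pos hl)).trans ?_)
  rw [show (5:ℝ) ^ n / (l / 2) = 2 * 5 ^ n / l by field_simp]

lemma setLIntegral_Ioo_rpow {s y : ℝ} (hs : -1 < s) (hy : 0 ≤ y) :
    ∫⁻ l in Ioo 0 y, ENNReal.ofReal (l ^ s) = ENNReal.ofReal (y ^ (s + 1) / (s + 1)) := by
  have hi : IntegrableOn (fun l : ℝ => l ^ s) (Ioo 0 y) :=
    ((intervalIntegral.intervalIntegrable_rpow' hs (a := 0) (b := y)).1).mono_set Ioo_subset_Ioc_self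
  rw [← ofReal_integral_eq_lintegral_ofReal hi, ← integral_Ioc_eq_integral_Ioo,
    ← intervalIntegral.integral_of_le hy, integral_rpow (Or.inl hs),
    Real.zero_rpow (by linarith), sub_zero]
  filter_upwards [ae_restrict_mem measurableSet_Ioo] with l hl
  exact Real.rpow_nonneg hl.1.le _

lemma rpow_le_lintegral_indicator {p : ℝ} (hp : 1 < p) (x : ℝ≥0∞) :
    x ^ p ≤ ENNReal.ofReal p * ∫⁻ l in Ioi (0:ℝ),
      {l : ℝ | ENNReal.ofReal l < x}.indicator (fun l => ENNReal.ofReal (l ^ (p - 1))) l := by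
  have key : ∀ y : ℝ, 0 ≤ y → ENNReal.ofReal y ≤ x → ENNReal.ofReal (y ^ p)
      ≤ ENNReal.ofReal p * ∫⁻ l in Ioi (0:ℝ),
      {l : ℝ | ENNReal.ofReal l < x}.indicator (fun l => ENNReal.ofReal (l ^ (p - 1))) l := by
    intro y hy hyx
    have hm : MeasurableSet {l : ℝ | ENNReal.ofReal l < x} :=
      measurableSet_lt ENNReal.measurable_ofReal measurable_const
    rw [lintegral_indicator hm, Measure.restrict_restrict hm]
    have : ENNReal.ofReal (y ^ p) = ENNReal.ofReal p
        * ∫⁻ l in Ioo 0 y, ENNReal.ofReal (l ^ (p - 1)) := by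
      rw [setLIntegral_Ioo_rpow (by linarith) hy, ← ENNReal.ofReal_mul (by linarith)]
      congr 1
      rw [sub_add_cancel]
      field_simp
    rw [this]
    gcongr
    intro l hl
    refine ⟨?_, hl.1⟩
    exact lt_of_lt_of_le ((ENNReal.ofReal_lt_ofReal_iff_of_nonneg hl.1.le).2 hl.2) hyx
  by_cases hx : x = ∞
  · refine le_top.trans (top_le_iff.2 (ENNReal.eq_top_of_forall_nnreal_le fun r => ?_))
    have := key ((r:ℝ) ^ p⁻¹) (by positivity) (hx ▸ le_top)
    rwa [← Real.rpow_mul NNReal.zero_le_coe, inv_mul_cancel₀ (by linarith), Real.rpow_one,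
      ENNReal.ofReal_coe_nnreal] at this
  · have := key x.toReal ENNReal.toReal_nonneg (ENNReal.ofReal_toReal hx).le
    rwa [← ENNReal.ofReal_rpow_of_nonneg ENNReal.toReal_nonneg (by linarith),
      ENNReal.ofReal_toReal hx] at this

lemma mul_lintegral_indicator_le {p : ℝ} (hp : 1 < p) (x : ℝ≥0∞) :
    x * ∫⁻ l in Ioi (0:ℝ),
      {l : ℝ | ENNReal.ofReal l < 2 * x}.indicator (fun l => ENNReal.ofReal (l ^ (p - 2))) l
    ≤ ENNReal.ofReal (2 ^ (p - 1) / (p - 1)) * x ^ p := by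
  have hp1 : 0 < p - 1 := by linarith
  by_cases hx : x = ∞
  · rw [hx, ENNReal.top_rpow_of_pos (by linarith),
      ENNReal.mul_top (ENNReal.ofReal_pos.2 (by positivity)).ne']
    exact le_top
  set y := x.toReal with hy
  have hy0 : 0 ≤ y := ENNReal.toReal_nonneg
  have hxy : x = ENNReal.ofReal y := (ENNReal.ofReal_toReal hx).symm
  have hm : MeasurableSet {l : ℝ | ENNReal.ofReal l < 2 * x} :=
    measurableSet_lt ENNReal.measurable_ofReal measurable_const
  rw [lintegral_indicator hm, Measure.restrict_restrict hm]
  have h1 : ∫⁻ l in {l : ℝ | ENNReal.ofReal l < 2 * x} ∩ Ioi 0, ENNReal.ofReal (l ^ (p - 2))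
      ≤ ∫⁻ l in Ioo 0 (2 * y), ENNReal.ofReal (l ^ (p - 2)) := by
    refine lintegral_mono_set fun l hl => ⟨hl.2, ?_⟩
    have h : ENNReal.ofReal l < 2 * x := hl.1
    rw [hxy, show (2:ℝ≥0∞) = ENNReal.ofReal 2 by simp, ← ENNReal.ofReal_mul zero_le_two] at h
    exact (ENNReal.ofReal_lt_ofReal_iff_of_nonneg (le_of_lt hl.2)).1 h
  refine (mul_le_mul_right h1 _).trans ?_
  rw [setLIntegral_Ioo_rpow (by linarith) (by positivity), hxy,
    ENNReal.ofReal_rpow_of_nonneg hy0 (by linarith), ← ENNReal.ofReal_mul hy0,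
    ← ENNReal.ofReal_mul (by positivity)]
  refine ENNReal.ofReal_le_ofReal (le_of_eq ?_)
  rw [show p - 2 + 1 = p - 1 by ring, Real.mul_rpow zero_le_two hy0]
  rcases hy0.eq_or_lt with h | h
  · rw [← h, Real.zero_rpow (by linarith), Real.zero_rpow (by linarith)]; simp
  · rw [Real.rpow_sub_one h.ne' p]
    field_simp

/-- The Hardy–Littlewood maximal inequality. -/
lemma lintegral_hlMax_rpow_le {n : ℕ} (hn : 1 ≤ n) {p : ℝ} (hp : 1 < p) :
    ∃ C > (0:ℝ), ∀ f : Rn n → ℝ≥0∞, Measurable f →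
      ∫⁻ x, hlMax f x ^ p ≤ ENNReal.ofReal C * ∫⁻ x, f x ^ p := by
  have hp1 : 0 < p - 1 := by linarith
  have hp0 : 0 < p := by linarith
  refine ⟨p * ((2 * 5 ^ n) * (2 ^ (p - 1) / (p - 1))), by positivity, fun f hf => ?_⟩
  have hM := measurable_hlMax hf
  have hmeas : ∀ (g : Rn n → ℝ≥0∞) (s : ℝ), Measurable g → Measurable (Function.uncurry
      fun (x : Rn n) (l : ℝ) => {l : ℝ | ENNReal.ofReal l < g x}.indicator
        (fun l => ENNReal.ofReal (l ^ s)) l) := by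
    intro g s hg
    have : Measurable ({z : Rn n × ℝ | ENNReal.ofReal z.2 < g z.1}.indicator
        (fun z => ENNReal.ofReal (z.2 ^ s))) :=
      (ENNReal.measurable_ofReal.comp (measurable_snd.pow_const s)).indicator
        (measurableSet_lt (ENNReal.measurable_ofReal.comp measurable_snd) (hg.comp measurable_fst))
    exact this
  have h1 : ∀ l ∈ Ioi (0:ℝ), ∫⁻ x, {l : ℝ | ENNReal.ofReal l < hlMax f x}.indicator
        (fun l => ENNReal.ofReal (l ^ (p - 1))) l
      ≤ ENNReal.ofReal (2 * 5 ^ n) * ∫⁻ y, f y * {l : ℝ | ENNReal.ofReal l < 2 * f y}.indicator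
        (fun l => ENNReal.ofReal (l ^ (p - 2))) l := by
    intro l hl
    have hl : 0 < l := hl
    have e1 : ∀ x, {l : ℝ | ENNReal.ofReal l < hlMax f x}.indicator
        (fun l => ENNReal.ofReal (l ^ (p - 1))) l
        = {x | ENNReal.ofReal l < hlMax f x}.indicator
          (fun _ => ENNReal.ofReal (l ^ (p - 1))) x := fun x => rfl
    have hs : MeasurableSet {y | ENNReal.ofReal l < 2 * f y} :=
      measurableSet_lt measurable_const (hf.const_mul _)
    have e2 : ∀ y, f y * {l : ℝ | ENNReal.ofReal l < 2 * f y}.indicator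
        (fun l => ENNReal.ofReal (l ^ (p - 2))) l
        = ENNReal.ofReal (l ^ (p - 2)) * {y | ENNReal.ofReal l < 2 * f y}.indicator f y := by
      intro y
      by_cases hy : ENNReal.ofReal l < 2 * f y
      · rw [indicator_of_mem (s := {l : ℝ | ENNReal.ofReal l < 2 * f y}) hy,
          indicator_of_mem (s := {y | ENNReal.ofReal l < 2 * f y}) hy, mul_comm]
      · rw [indicator_of_notMem (s := {l : ℝ | ENNReal.ofReal l < 2 * f y}) hy,
          indicator_of_notMem (s := {y | ENNReal.ofReal l < 2 * f y}) hy, mul_zero, mul_zero]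
    simp_rw [e1, e2]
    rw [lintegral_indicator_const (measurableSet_lt measurable_const hM),
      lintegral_const_mul _ (hf.indicator hs)]
    refine (mul_le_mul_right (volume_lt_hlMax_le' hn hf hl) _).trans (le_of_eq ?_)
    rw [← mul_assoc, ← mul_assoc, ← ENNReal.ofReal_mul (by positivity),
      ← ENNReal.ofReal_mul (by positivity)]
    congr 2
    rw [show p - 1 = (p - 2) + 1 by ring, Real.rpow_add_one hl.ne']
    field_simp
  calc ∫⁻ x, hlMax f x ^ p
      ≤ ∫⁻ x, ENNReal.ofReal p * ∫⁻ l in Ioi (0:ℝ), {l : ℝ | ENNReal.ofReal l < hlMax f x}.indicator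
        (fun l => ENNReal.ofReal (l ^ (p - 1))) l :=
        lintegral_mono fun x => rpow_le_lintegral_indicator hp _
    _ = ENNReal.ofReal p * ∫⁻ l in Ioi (0:ℝ), ∫⁻ x, {l : ℝ | ENNReal.ofReal l < hlMax f x}.indicator
        (fun l => ENNReal.ofReal (l ^ (p - 1))) l := by
        rw [lintegral_const_mul' _ _ ENNReal.ofReal_ne_top, lintegral_lintegral_swap]
        exact (hmeas _ _ hM).aemeasurable
    _ ≤ ENNReal.ofReal p * ∫⁻ l in Ioi (0:ℝ), ENNReal.ofReal (2 * 5 ^ n) * ∫⁻ y, f y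
          * {l : ℝ | ENNReal.ofReal l < 2 * f y}.indicator
        (fun l => ENNReal.ofReal (l ^ (p - 2))) l := by
        exact mul_le_mul_right (setLIntegral_mono' measurableSet_Ioi h1) _
    _ = ENNReal.ofReal p * (ENNReal.ofReal (2 * 5 ^ n) * ∫⁻ y, f y * ∫⁻ l in Ioi (0:ℝ),
          {l : ℝ | ENNReal.ofReal l < 2 * f y}.indicator
        (fun l => ENNReal.ofReal (l ^ (p - 2))) l) := by
        rw [lintegral_const_mul' _ _ ENNReal.ofReal_ne_top, lintegral_lintegral_swap]
        · congr 2
          refine lintegral_congr fun y => ?_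
          rw [lintegral_const_mul]
          exact (hmeas _ (p - 2) (hf.const_mul 2)).comp (measurable_prodMk_left (x := y))
        · exact ((hf.comp measurable_snd).mul
            ((hmeas _ (p - 2) (hf.const_mul 2)).comp measurable_swap)).aemeasurable
    _ ≤ ENNReal.ofReal p * (ENNReal.ofReal (2 * 5 ^ n) * ∫⁻ y,
          ENNReal.ofReal (2 ^ (p - 1) / (p - 1)) * f y ^ p) := by
        refine mul_le_mul_right (mul_le_mul_right (lintegral_mono fun y => ?_) _) _
        exact mul_lintegral_indicator_le hp _
    _ = _ := by
        rw [lintegral_const_mul' _ _ ENNReal.ofReal_ne_top, ENNReal.ofReal_mul hp0.le,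
          ENNReal.ofReal_mul (p := 2 * 5 ^ n) (by positivity), mul_assoc, mul_assoc]

lemma le_add_rpow_mul_rpow {g a : ℝ≥0∞} {s : ℝ} (hs : 1 ≤ s) (ha : a ≠ 0) (ha' : a ≠ ∞) :
    g ≤ a + g ^ s * a ^ (1 - s) := by
  rcases le_or_gt g a with h | h
  · exact h.trans le_self_add
  · refine le_trans ?_ le_add_self
    by_cases hg : g = ∞
    · rw [hg, ENNReal.top_rpow_of_pos (by linarith), ENNReal.top_mul]
      exact (ENNReal.rpow_pos (pos_iff_ne_zero.2 ha) ha').ne'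
    · have hg0 : g ≠ 0 := (lt_of_le_of_lt zero_le h).ne'
      calc g = g ^ s * g ^ (1 - s) := by
            rw [← ENNReal.rpow_add _ _ hg0 hg]; simp
        _ ≤ g ^ s * a ^ (1 - s) := by
            refine mul_le_mul_right ?_ _
            rw [← neg_sub, ENNReal.rpow_neg, ENNReal.rpow_neg, ENNReal.inv_le_inv]
            exact ENNReal.rpow_le_rpow h.le (by linarith)

/-- Pointwise comparison of averages under the local log-Hölder condition. -/
lemma ballAvg_rpow_le {n : ℕ} {s : Rn n → ℝ} {S D : ℝ} (hsm : Measurable s) (hs1 : ∀ x, 1 ≤ s x)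
    (hsS : ∀ x, s x ≤ S) (hD : 0 ≤ D)
    (hloc : ∀ x y, x ≠ y → |s x - s y| ≤ D / Real.log (Real.exp 1 + 1 / ‖x - y‖))
    {g : Rn n → ℝ≥0∞} (hg : Measurable g) (hg1 : ∀ y, g y = 0 ∨ 1 ≤ g y)
    (hintg : ∫⁻ y, g y ^ s y ≤ 1) (x : Rn n) {r : ℝ} (hr : 0 < r) :
    ballAvg g x r ^ s x
      ≤ ENNReal.ofReal ((1 + Real.exp (n * D)) ^ S) * ballAvg (fun y => g y ^ s y) x r := by
  have hE := Real.exp_pos (n * D)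
  have hgs : Measurable fun y => g y ^ s y := hg.pow hsm
  set A := ballAvg (fun y => g y ^ s y) x r with hA
  have hAr : A ≤ ENNReal.ofReal (1 / r ^ n) :=
    (ballAvg_le _ x hr).trans (mul_le_of_le_one_right' hintg)
  have hS0 : 0 ≤ S := (zero_le_one.trans (hs1 x)).trans (hsS x)
  have hsx : 0 < s x := zero_lt_one.trans_le (hs1 x)
  rcases le_or_gt A 1 with hA1 | hA1
  · have h1 : ballAvg g x r ≤ A := by
      refine ballAvg_mono (fun y => ?_) x r
      rcases hg1 y with h | h
      · rw [h]; exact zero_le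
      · exact ENNReal.le_rpow_self_of_one_le h (hs1 y)
    calc ballAvg g x r ^ s x ≤ A ^ s x := ENNReal.rpow_le_rpow h1 hsx.le
      _ ≤ A := ENNReal.rpow_le_self_of_le_one hA1 (hs1 x)
      _ ≤ _ := by
        refine le_mul_of_one_le_left' ?_
        rw [ENNReal.one_le_ofReal]
        exact Real.one_le_rpow (by linarith) hS0
  · have hAt : A ≠ ∞ := (hAr.trans_lt ENNReal.ofReal_lt_top).ne
    have hrn : r < 1 := by
      by_contra h
      have h2 : (1:ℝ) ≤ r ^ n := one_le_pow₀ (not_lt.1 h)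
      have h3 : ENNReal.ofReal (1 / r ^ n) ≤ 1 := by
        rw [ENNReal.ofReal_le_one]
        exact div_le_one_of_le₀ h2 (by positivity)
      exact absurd (hA1.trans_le (hAr.trans h3)) (lt_irrefl _)
    set a := A ^ (s x)⁻¹ with ha
    have ha1 : 1 ≤ a := ENNReal.one_le_rpow hA1.le (by positivity)
    have ha0 : a ≠ 0 := (zero_lt_one.trans_le ha1).ne'
    have hat : a ≠ ∞ := ENNReal.rpow_ne_top_of_nonneg (by positivity) hAt
    have haA : a ^ s x = A := by
      rw [ha, ← ENNReal.rpow_mul, inv_mul_cancel₀ hsx.ne', ENNReal.rpow_one]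
    have har : a ≤ ENNReal.ofReal (1 / r ^ n) := by
      refine le_trans ?_ hAr
      rw [← haA]
      exact ENNReal.le_rpow_self_of_one_le ha1 (hs1 x)
    have hpt : ∀ y ∈ Metric.closedBall x r, g y
        ≤ a + ENNReal.ofReal (Real.exp (n * D)) * a ^ (1 - s x) * g y ^ s y := by
      intro y hy
      refine (le_add_rpow_mul_rpow (hs1 y) ha0 hat).trans ?_
      rw [mul_comm (g y ^ s y)]
      refine add_le_add le_rfl (mul_le_mul_left ?_ _)
      rw [show 1 - s y = (s x - s y) + (1 - s x) by ring, ENNReal.rpow_add _ _ ha0 hat]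
      refine mul_le_mul_left ?_ _
      have hd : |s x - s y| ≤ D / Real.log (Real.exp 1 + 1 / r) := by
        have hlr : 0 < Real.log (Real.exp 1 + 1 / r) := by
          refine Real.log_pos ?_
          have := Real.one_lt_exp_iff.2 zero_lt_one
          have : 0 < 1 / r := by positivity
          linarith
        by_cases hxy : x = y
        · rw [hxy, sub_self, abs_zero]; positivity
        · refine (hloc x y hxy).trans ?_
          have hpos : 0 < ‖x - y‖ := norm_pos_iff.2 (sub_ne_zero.2 hxy)
          have hle : ‖x - y‖ ≤ r := by
            rw [← dist_eq_norm, dist_comm]; exact hy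
          gcongr
      calc a ^ (s x - s y) ≤ a ^ |s x - s y| :=
            ENNReal.rpow_le_rpow_of_exponent_le ha1 (le_abs_self _)
        _ ≤ ENNReal.ofReal (1 / r ^ n) ^ |s x - s y| := ENNReal.rpow_le_rpow har (abs_nonneg _)
        _ = ENNReal.ofReal ((1 / r ^ n) ^ |s x - s y|) :=
            ENNReal.ofReal_rpow_of_nonneg (by positivity) (abs_nonneg _)
        _ ≤ _ := by
            refine ENNReal.ofReal_le_ofReal ?_
            rw [Real.rpow_def_of_pos (by positivity)]
            refine Real.exp_le_exp.2 ?_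
            have h1r : 1 < 1 / r := by rw [lt_div_iff₀ hr]; linarith
            have hl0 : 0 < Real.log (1 / r) := Real.log_pos h1r
            have hl1 : Real.log (1 / r) ≤ Real.log (Real.exp 1 + 1 / r) :=
              Real.log_le_log (by positivity) (by linarith [Real.exp_pos 1])
            have : Real.log (1 / r ^ n) = n * Real.log (1 / r) := by
              rw [← Real.log_pow]; congr 1; simp
            rw [this, mul_assoc]
            refine mul_le_mul_of_nonneg_left ?_ (by positivity)
            rw [le_div_iff₀ (hl0.trans_le hl1)] at hd
            calc Real.log (1 / r) * |s x - s y|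
                ≤ Real.log (Real.exp 1 + 1 / r) * |s x - s y| := by gcongr
              _ ≤ D := by linarith
    have hav : ballAvg g x r ≤ ENNReal.ofReal (1 + Real.exp (n * D)) * a := by
      calc ballAvg g x r ≤ ballAvg (fun y => a
              + ENNReal.ofReal (Real.exp (n * D)) * a ^ (1 - s x) * g y ^ s y) x r :=
            ballAvg_congr_on hpt
        _ ≤ a + ENNReal.ofReal (Real.exp (n * D)) * a ^ (1 - s x) * A := by
            rw [ballAvg_add measurable_const, ballAvg_const_mul _ hgs]
            exact add_le_add (ballAvg_const_le _ x hr) le_rfl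
        _ = a + ENNReal.ofReal (Real.exp (n * D)) * a := by
            rw [mul_assoc]
            congr 2
            rw [← haA, ← ENNReal.rpow_add _ _ ha0 hat]
            simp
        _ = _ := by
            rw [ENNReal.ofReal_add zero_le_one hE.le, ENNReal.ofReal_one, add_mul, one_mul]
    calc ballAvg g x r ^ s x ≤ (ENNReal.ofReal (1 + Real.exp (n * D)) * a) ^ s x :=
          ENNReal.rpow_le_rpow hav hsx.le
      _ = ENNReal.ofReal ((1 + Real.exp (n * D)) ^ s x) * A := by
          rw [ENNReal.mul_rpow_of_nonneg _ _ hsx.le, haA,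
            ENNReal.ofReal_rpow_of_nonneg (by positivity) hsx.le]
      _ ≤ _ := by
          gcongr
          · linarith
          · exact hsS x

lemma hlMax_rpow_le {n : ℕ} {s : Rn n → ℝ} {S D : ℝ} (hsm : Measurable s) (hs1 : ∀ x, 1 ≤ s x)
    (hsS : ∀ x, s x ≤ S) (hD : 0 ≤ D)
    (hloc : ∀ x y, x ≠ y → |s x - s y| ≤ D / Real.log (Real.exp 1 + 1 / ‖x - y‖))
    {g : Rn n → ℝ≥0∞} (hg : Measurable g) (hg1 : ∀ y, g y = 0 ∨ 1 ≤ g y)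
    (hintg : ∫⁻ y, g y ^ s y ≤ 1) (x : Rn n) :
    hlMax g x ^ s x
      ≤ ENNReal.ofReal ((1 + Real.exp (n * D)) ^ S) * hlMax (fun y => g y ^ s y) x := by
  have hsx : 0 < s x := zero_lt_one.trans_le (hs1 x)
  rw [← ENNReal.le_rpow_inv_iff hsx]
  refine iSup_le fun k => ?_
  rw [ENNReal.le_rpow_inv_iff hsx]
  refine (ballAvg_rpow_le hsm hs1 hsS hD hloc hg hg1 hintg x (by positivity)).trans ?_
  gcongr
  exact le_iSup (fun k : ℤ => ballAvg (fun y => g y ^ s y) x ((2:ℝ) ^ k)) k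

lemma rpow_le_exp_mul_rpow_add {t u v D R m : ℝ} (ht0 : 0 ≤ t) (ht1 : t ≤ 1) (hu : 1 ≤ u)
    (hR : 0 ≤ R) (hm : 0 < m) (huv : |u - v| ≤ D / Real.log (Real.exp 1 + R)) :
    t ^ u ≤ Real.exp (m * D) * t ^ v + (Real.exp 1 + R) ^ (-m) := by
  have he := Real.one_lt_exp_iff.2 zero_lt_one
  have hb : 1 < Real.exp 1 + R := by linarith
  have hlog : 0 < Real.log (Real.exp 1 + R) := Real.log_pos hb
  rcases le_or_gt t ((Real.exp 1 + R) ^ (-m)) with h | h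
  · have : t ^ u ≤ t := Real.rpow_le_self_of_le_one ht0 ht1 hu
    have : 0 ≤ Real.exp (m * D) * t ^ v := by positivity
    linarith
  · have htp : 0 < t := lt_trans (by positivity) h
    have h2 : t ^ u ≤ Real.exp (m * D) * t ^ v := by
      rw [show u = (u - v) + v by ring, Real.rpow_add htp]
      refine mul_le_mul_of_nonneg_right ?_ (by positivity)
      rw [Real.rpow_def_of_pos htp]
      refine Real.exp_le_exp.2 ?_
      have h3 : -(m * Real.log (Real.exp 1 + R)) ≤ Real.log t := by
        have := Real.log_le_log (by positivity) h.le
        rwa [Real.log_rpow (by linarith), neg_mul] at this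
      have h4 : Real.log t ≤ 0 := Real.log_nonpos ht0 ht1
      rw [le_div_iff₀ hlog] at huv
      calc Real.log t * (u - v) ≤ (-Real.log t) * |u - v| := by
            nlinarith [neg_abs_le (u - v)]
        _ ≤ (m * Real.log (Real.exp 1 + R)) * |u - v| := by
            gcongr; linarith
        _ = m * (|u - v| * Real.log (Real.exp 1 + R)) := by ring
        _ ≤ m * D := by gcongr
    have : 0 < (Real.exp 1 + R) ^ (-m) := by positivity
    linarith

lemma ennreal_rpow_le_exp_mul_rpow_add {t : ℝ≥0∞} {u v D R m : ℝ} (ht1 : t ≤ 1) (hu : 1 ≤ u)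
    (hv : 1 ≤ v) (hR : 0 ≤ R) (hm : 0 < m) (huv : |u - v| ≤ D / Real.log (Real.exp 1 + R)) :
    t ^ u ≤ ENNReal.ofReal (Real.exp (m * D)) * t ^ v
      + ENNReal.ofReal ((Real.exp 1 + R) ^ (-m)) := by
  have htt : t ≠ ∞ := (ht1.trans_lt ENNReal.one_lt_top).ne
  have ht0 : 0 ≤ t.toReal := ENNReal.toReal_nonneg
  have ht1' : t.toReal ≤ 1 := ENNReal.toReal_le_of_le_ofReal zero_le_one (by simpa using ht1)
  have he := Real.exp_pos 1
  rw [← ENNReal.ofReal_toReal htt, ENNReal.ofReal_rpow_of_nonneg ht0 (by linarith),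
    ENNReal.ofReal_rpow_of_nonneg ht0 (by linarith), ← ENNReal.ofReal_mul (by positivity),
    ← ENNReal.ofReal_add (by positivity) (by positivity)]
  exact ENNReal.ofReal_le_ofReal (rpow_le_exp_mul_rpow_add ht0 ht1' hu hR hm huv)

lemma lintegral_exp_one_add_norm_rpow_lt_top (n : ℕ) :
    ∫⁻ x : Rn n, ENNReal.ofReal ((Real.exp 1 + ‖x‖) ^ (-((n:ℝ) + 1))) < ∞ := by
  refine lt_of_le_of_lt (lintegral_mono fun x => ?_)
    (finite_integral_one_add_norm (E := Rn n) (r := (n:ℝ) + 1) (by simp))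
  refine ENNReal.ofReal_le_ofReal ?_
  have he := Real.one_lt_exp_iff.2 zero_lt_one
  exact Real.rpow_le_rpow_of_nonpos (by positivity) (by linarith) (by linarith [n.cast_nonneg (α := ℝ)])

/-- Modular boundedness of the maximal function for log-Hölder exponents. -/
lemma lintegral_hlMax_rpow_var_le {n : ℕ} (hn : 1 ≤ n) {q : Rn n → ℝ} (hq : Measurable q)
    {qm Q D qinf : ℝ} (hqm : 1 < qm) (hqm' : ∀ x, qm ≤ q x) (hQ : ∀ x, q x ≤ Q) (hD : 0 ≤ D)
    (hqinf : 1 < qinf)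
    (hloc : ∀ x y, x ≠ y → |q x - q y| ≤ D / Real.log (Real.exp 1 + 1 / ‖x - y‖))
    (hdec : ∀ x, |q x - qinf| ≤ D / Real.log (Real.exp 1 + ‖x‖)) :
    ∃ C > (0:ℝ), ∀ f : Rn n → ℝ≥0∞, Measurable f → ∫⁻ x, f x ^ q x ≤ 1 →
      ∫⁻ x, hlMax f x ^ q x ≤ ENNReal.ofReal C := by
  obtain ⟨C₁, hC₁, h₁⟩ := lintegral_hlMax_rpow_le hn hqm
  obtain ⟨C₂, hC₂, h₂⟩ := lintegral_hlMax_rpow_le hn hqinf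
  have hqm0 : 0 < qm := by linarith
  set W := ∫⁻ x : Rn n, ENNReal.ofReal ((Real.exp 1 + ‖x‖) ^ (-((n:ℝ) + 1))) with hW
  have hWt : W ≠ ∞ := (lintegral_exp_one_add_norm_rpow_lt_top n).ne
  set E := ENNReal.ofReal (Real.exp (((n:ℝ) + 1) * D)) with hE
  set K := ENNReal.ofReal ((1 + Real.exp (n * D)) ^ (Q / qm)) with hK
  set T : ℝ≥0∞ := 2 ^ Q * (K ^ qm * ENNReal.ofReal C₁
    + (E * (ENNReal.ofReal C₂ * (E + W)) + W)) with hT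
  have hTt : T ≠ ∞ := by
    have hKt : K ^ qm ≠ ∞ := ENNReal.rpow_ne_top_of_nonneg hqm0.le ENNReal.ofReal_ne_top
    have h2t : (2:ℝ≥0∞) ^ Q ≠ ∞ :=
      ENNReal.rpow_ne_top_of_nonneg (by linarith [hqm' 0, hQ 0]) ENNReal.ofNat_ne_top
    refine ENNReal.mul_ne_top h2t (ENNReal.add_ne_top.2 ⟨ENNReal.mul_ne_top hKt
      ENNReal.ofReal_ne_top, ENNReal.add_ne_top.2 ⟨ENNReal.mul_ne_top ENNReal.ofReal_ne_top
        (ENNReal.mul_ne_top ENNReal.ofReal_ne_top (ENNReal.add_ne_top.2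
          ⟨ENNReal.ofReal_ne_top, hWt⟩)), hWt⟩⟩)
  refine ⟨T.toReal + 1, by positivity, fun f hf hintg => ?_⟩
  suffices ∫⁻ x, hlMax f x ^ q x ≤ T by
    refine this.trans ?_
    rw [ENNReal.ofReal_add ENNReal.toReal_nonneg zero_le_one, ENNReal.ofReal_toReal hTt]
    exact le_self_add
  have hq0 : ∀ x, 0 < q x := fun x => hqm0.trans_le (hqm' x)
  have hset : MeasurableSet {y | 1 ≤ f y} := measurableSet_le measurable_const hf
  set f₁ := {y | 1 ≤ f y}.indicator f with hf₁
  set f₂ := {y | 1 ≤ f y}ᶜ.indicator f with hf₂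
  have hf₁m : Measurable f₁ := hf.indicator hset
  have hf₂m : Measurable f₂ := hf.indicator hset.compl
  have hsum : ∀ y, f y = f₁ y + f₂ y := fun y =>
    (congrFun (indicator_self_add_compl {y | 1 ≤ f y} f) y).symm
  have hf₁q : ∫⁻ x, f₁ x ^ q x ≤ 1 := by
    refine (lintegral_mono fun y => ENNReal.rpow_le_rpow ?_ (hq0 y).le).trans hintg
    rw [hsum y]; exact le_self_add
  have hf₂q : ∫⁻ x, f₂ x ^ q x ≤ 1 := by
    refine (lintegral_mono fun y => ENNReal.rpow_le_rpow ?_ (hq0 y).le).trans hintg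
    rw [hsum y]; exact le_add_self
  have hf₂1 : ∀ y, f₂ y ≤ 1 := by
    intro y
    by_cases hy : 1 ≤ f y
    · rw [hf₂, indicator_of_notMem (by simpa using hy)]; exact zero_le
    · rw [hf₂, indicator_of_mem (by simpa using hy)]; exact (not_le.1 hy).le
  -- the large part
  have hlarge : ∫⁻ x, hlMax f₁ x ^ q x ≤ K ^ qm * ENNReal.ofReal C₁ := by
    set s : Rn n → ℝ := fun x => q x / qm with hs
    have hsm : Measurable s := hq.div_const qm
    have hs1 : ∀ x, 1 ≤ s x := fun x => (one_le_div hqm0).2 (hqm' x)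
    have hsq : ∀ x, s x * qm = q x := fun x => div_mul_cancel₀ _ hqm0.ne'
    have hg1 : ∀ y, f₁ y = 0 ∨ 1 ≤ f₁ y := by
      intro y
      by_cases hy : 1 ≤ f y
      · right; rw [hf₁, indicator_of_mem (by exact hy)]; exact hy
      · left; rw [hf₁, indicator_of_notMem (by exact hy)]
    have hintg' : ∫⁻ y, f₁ y ^ s y ≤ 1 := by
      refine (lintegral_mono fun y => ?_).trans hf₁q
      rcases hg1 y with h | h
      · show f₁ y ^ s y ≤ f₁ y ^ q y
        rw [h, ENNReal.zero_rpow_of_pos (zero_lt_one.trans_le (hs1 y))]; exact zero_le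
      · refine ENNReal.rpow_le_rpow_of_exponent_le h ?_
        exact div_le_self (hq0 y).le hqm.le
    have hloc' : ∀ x y, x ≠ y → |s x - s y| ≤ D / Real.log (Real.exp 1 + 1 / ‖x - y‖) := by
      intro x y hxy
      refine le_trans ?_ (hloc x y hxy)
      rw [hs, ← sub_div, abs_div, abs_of_pos hqm0]
      exact div_le_self (abs_nonneg _) hqm.le
    have hpt := hlMax_rpow_le hsm hs1 (S := Q / qm) (fun x => by
      show q x / qm ≤ Q / qm
      have := hQ x
      gcongr) hD hloc' hf₁m hg1 hintg'
    calc ∫⁻ x, hlMax f₁ x ^ q x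
        ≤ ∫⁻ x, K ^ qm * hlMax (fun y => f₁ y ^ s y) x ^ qm := by
          refine lintegral_mono fun x => ?_
          show hlMax f₁ x ^ q x ≤ _
          rw [← hsq x, ENNReal.rpow_mul, ← ENNReal.mul_rpow_of_nonneg _ _ hqm0.le]
          exact ENNReal.rpow_le_rpow (hpt x) hqm0.le
      _ = K ^ qm * ∫⁻ x, hlMax (fun y => f₁ y ^ s y) x ^ qm :=
          lintegral_const_mul' _ _ (ENNReal.rpow_ne_top_of_nonneg hqm0.le ENNReal.ofReal_ne_top)
      _ ≤ K ^ qm * (ENNReal.ofReal C₁ * ∫⁻ x, (f₁ x ^ s x) ^ qm) := by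
          gcongr
          exact h₁ _ (hf₁m.pow hsm)
      _ ≤ K ^ qm * ENNReal.ofReal C₁ := by
          gcongr
          refine mul_le_of_le_one_right' ?_
          simp_rw [← ENNReal.rpow_mul, hsq]
          exact hf₁q
  -- the small part
  have hWm : Measurable fun x : Rn n =>
      ENNReal.ofReal ((Real.exp 1 + ‖x‖) ^ (-((n:ℝ) + 1))) := by fun_prop
  have hcomp : ∀ (h : Rn n → ℝ≥0∞), (∀ x, h x ≤ 1) →
      ∫⁻ x, h x ^ q x ≤ E * (∫⁻ x, h x ^ qinf) + W ∧
      ∫⁻ x, h x ^ qinf ≤ E * (∫⁻ x, h x ^ q x) + W := by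
    intro h hh
    rw [← lintegral_const_mul' _ _ ENNReal.ofReal_ne_top,
      ← lintegral_const_mul' _ _ ENNReal.ofReal_ne_top, hW, ← lintegral_add_right _ hWm,
      ← lintegral_add_right _ hWm]
    constructor
    · exact lintegral_mono fun x => ennreal_rpow_le_exp_mul_rpow_add (hh x)
        (hqm.le.trans (hqm' x)) hqinf.le (norm_nonneg x) (by positivity) (hdec x)
    · exact lintegral_mono fun x => ennreal_rpow_le_exp_mul_rpow_add (hh x) hqinf.le
        (hqm.le.trans (hqm' x)) (norm_nonneg x) (by positivity)
        (by rw [abs_sub_comm]; exact hdec x)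
  have hsmall : ∫⁻ x, hlMax f₂ x ^ q x ≤ E * (ENNReal.ofReal C₂ * (E + W)) + W := by
    refine (hcomp _ (hlMax_le_of_le hf₂1)).1.trans ?_
    gcongr
    refine (h₂ _ hf₂m).trans ?_
    gcongr
    refine (hcomp _ hf₂1).2.trans ?_
    gcongr
    exact mul_le_of_le_one_right' hf₂q
  calc ∫⁻ x, hlMax f x ^ q x
      ≤ ∫⁻ x, 2 ^ Q * (hlMax f₁ x ^ q x + hlMax f₂ x ^ q x) := by
        refine lintegral_mono fun x => ?_
        have h1 : hlMax f x ≤ hlMax f₁ x + hlMax f₂ x := by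
          rw [show f = fun y => f₁ y + f₂ y from funext hsum]
          exact hlMax_add_le hf₁m x
        calc hlMax f x ^ q x ≤ (hlMax f₁ x + hlMax f₂ x) ^ q x :=
              ENNReal.rpow_le_rpow h1 (hq0 x).le
          _ ≤ 2 ^ (q x - 1) * (hlMax f₁ x ^ q x + hlMax f₂ x ^ q x) :=
              ENNReal.rpow_add_le_mul_rpow_add_rpow _ _ (hqm.le.trans (hqm' x))
          _ ≤ _ := by
              gcongr
              · exact one_le_two
              · linarith [hQ x]
    _ = 2 ^ Q * ((∫⁻ x, hlMax f₁ x ^ q x) + ∫⁻ x, hlMax f₂ x ^ q x) := by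
        rw [lintegral_const_mul' _ _ (ENNReal.rpow_ne_top_of_nonneg (by linarith [hqm' 0, hQ 0])
          ENNReal.ofNat_ne_top), lintegral_add_left ((measurable_hlMax hf₁m).pow hq)]
    _ ≤ T := by
        exact mul_le_mul_right (add_le_add hlarge hsmall) _

lemma setLIntegral_Ioi_rpow {s c : ℝ} (hs : s < -1) (hc : 0 < c) :
    ∫⁻ r in Ioi c, ENNReal.ofReal (r ^ s) = ENNReal.ofReal (c ^ (s + 1) / (-(s + 1))) := by
  rw [← ofReal_integral_eq_lintegral_ofReal (integrableOn_Ioi_rpow_of_lt hs hc),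
    integral_Ioi_rpow_of_lt hs hc, neg_div, div_neg]
  filter_upwards [ae_restrict_mem measurableSet_Ioi] with l hl
  exact Real.rpow_nonneg (hc.trans hl).le _

/-- Integrating the smaller of two powers over `(0,∞)`. -/
lemma lintegral_le_of_le_rpow {β κ : ℝ} (hβ : 0 < β) (hκ : 0 < κ) {a : ℝ≥0∞} {h : ℝ → ℝ≥0∞}
    (h₁ : ∀ r > 0, h r ≤ a * ENNReal.ofReal (r ^ (β - 1)))
    (h₂ : ∀ r > 0, h r ≤ ENNReal.ofReal (r ^ (-1 - κ))) :
    ∫⁻ r in Ioi (0:ℝ), h r ≤ ENNReal.ofReal (1 / β + 1 / κ) * a ^ (κ / (β + κ)) := by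
  rcases eq_or_ne a 0 with rfl | ha0
  · rw [setLIntegral_congr_fun (g := fun _ => 0) measurableSet_Ioi
      (fun r hr => by simpa using h₁ r hr)]
    simp
  rcases eq_or_ne a ∞ with rfl | hat
  · rw [ENNReal.top_rpow_of_pos (by positivity),
      ENNReal.mul_top (ENNReal.ofReal_pos.2 (by positivity)).ne']
    exact le_top
  set A := a.toReal with hA
  have hA0 : 0 < A := ENNReal.toReal_pos ha0 hat
  have haA : a = ENNReal.ofReal A := (ENNReal.ofReal_toReal hat).symm
  set δ := A ^ (-(1 / (β + κ))) with hδ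
  have hδ0 : 0 < δ := by positivity
  have i1 : ∫⁻ r in Ioo 0 δ, h r ≤ ENNReal.ofReal (1 / β * A ^ (κ / (β + κ))) := by
    calc ∫⁻ r in Ioo 0 δ, h r ≤ ∫⁻ r in Ioo 0 δ, a * ENNReal.ofReal (r ^ (β - 1)) :=
          setLIntegral_mono' measurableSet_Ioo fun r hr => h₁ r hr.1
      _ = ENNReal.ofReal (A * (δ ^ (β - 1 + 1) / (β - 1 + 1))) := by
          rw [lintegral_const_mul' _ _ hat, setLIntegral_Ioo_rpow (by linarith) hδ0.le, haA,
            ← ENNReal.ofReal_mul hA0.le]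
      _ ≤ _ := by
          refine ENNReal.ofReal_le_ofReal (le_of_eq ?_)
          rw [sub_add_cancel, hδ, ← Real.rpow_mul hA0.le]
          have : A ^ (κ / (β + κ)) = A * A ^ (-(1 / (β + κ)) * β) := by
            rw [← Real.rpow_one_add' hA0.le]
            · congr 1; field_simp; ring
            · have : 1 + -(1 / (β + κ)) * β = κ / (β + κ) := by field_simp; ring
              rw [this]; positivity
          rw [this]
          ring
  have i2 : ∫⁻ r in Ioi δ, h r ≤ ENNReal.ofReal (1 / κ * A ^ (κ / (β + κ))) := by
    calc ∫⁻ r in Ioi δ, h r ≤ ∫⁻ r in Ioi δ, ENNReal.ofReal (r ^ (-1 - κ)) :=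
          setLIntegral_mono' measurableSet_Ioi fun r hr => h₂ r (hδ0.trans hr)
      _ = ENNReal.ofReal (δ ^ (-1 - κ + 1) / (-(-1 - κ + 1))) :=
          setLIntegral_Ioi_rpow (by linarith) hδ0
      _ ≤ _ := by
          refine ENNReal.ofReal_le_ofReal (le_of_eq ?_)
          rw [show -1 - κ + 1 = -κ by ring, hδ, ← Real.rpow_mul hA0.le, neg_neg]
          have : -(1 / (β + κ)) * -κ = κ / (β + κ) := by field_simp
          rw [this]; ring
  have hsplit : ∫⁻ r in Ioi (0:ℝ), h r ≤ (∫⁻ r in Ioo 0 δ, h r) + ∫⁻ r in Ioi δ, h r := by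
    have : (Ioi (0:ℝ)) = Ioc 0 δ ∪ Ioi δ := (Ioc_union_Ioi_eq_Ioi hδ0.le).symm
    rw [this]
    refine (lintegral_union_le _ _ _).trans ?_
    rw [setLIntegral_congr Ioo_ae_eq_Ioc]
  refine hsplit.trans ((add_le_add i1 i2).trans ?_)
  rw [← ENNReal.ofReal_add (by positivity) (by positivity), ← add_mul,
    ENNReal.ofReal_mul (by positivity), haA, ENNReal.ofReal_rpow_of_nonneg hA0.le (by positivity)]

lemma enorm_rpow_le_lintegral {E : Type*} [NormedAddCommGroup E] {s : ℝ} (hs : 0 < s) {z : E}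
    (hz : z ≠ 0) :
    ‖z‖ₑ ^ (-s) ≤ ENNReal.ofReal s * ∫⁻ r in Ioi (0:ℝ),
      {r : ℝ | ‖z‖ ≤ r}.indicator (fun r => ENNReal.ofReal (r ^ (-s - 1))) r := by
  have hz0 : 0 < ‖z‖ := norm_pos_iff.2 hz
  have h1 : ∫⁻ r in Ioi ‖z‖, ENNReal.ofReal (r ^ (-s - 1)) ≤ ∫⁻ r in Ioi (0:ℝ),
      {r : ℝ | ‖z‖ ≤ r}.indicator (fun r => ENNReal.ofReal (r ^ (-s - 1))) r := by
    have hm : MeasurableSet {r : ℝ | ‖z‖ ≤ r} := measurableSet_Ici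
    rw [lintegral_indicator hm, Measure.restrict_restrict hm]
    refine lintegral_mono_set fun r hr => ?_
    have hr : ‖z‖ < r := hr
    exact ⟨hr.le, hz0.trans hr⟩
  refine le_trans (le_of_eq ?_) (mul_le_mul_right h1 _)
  rw [setLIntegral_Ioi_rpow (by linarith) hz0, ← ENNReal.ofReal_mul hs.le, ← ofReal_norm,
    ENNReal.ofReal_rpow_of_pos hz0]
  congr 1
  rw [sub_add_cancel, neg_neg]
  field_simp

lemma setLIntegral_closedBall_le_of_rpow {n : ℕ} {q : ℝ} (hq : 1 < q) {f : Rn n → ℝ≥0∞}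
    (hintg : ∫⁻ y, f y ^ q ≤ 1) (x : Rn n) {r : ℝ} (hr : 0 < r) :
    ∫⁻ y in Metric.closedBall x r, f y
      ≤ ENNReal.ofReal ((unitVol n + 1) * r ^ ((n:ℝ) - n / q)) := by
  have hv := unitVol_nonneg n
  set a := ENNReal.ofReal (r ^ (-((n:ℝ) / q))) with ha
  have hap : 0 < r ^ (-((n:ℝ) / q)) := by positivity
  have ha0 : a ≠ 0 := (ENNReal.ofReal_pos.2 hap).ne'
  have e : a ^ (1 - q) = ENNReal.ofReal (r ^ ((n:ℝ) - n / q)) := by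
    rw [ha, ENNReal.ofReal_rpow_of_pos hap, ← Real.rpow_mul hr.le]
    congr 2
    field_simp
    ring
  calc ∫⁻ y in Metric.closedBall x r, f y
      ≤ ∫⁻ y in Metric.closedBall x r, (a + f y ^ q * a ^ (1 - q)) :=
        lintegral_mono fun y => le_add_rpow_mul_rpow hq.le ha0 ENNReal.ofReal_ne_top
    _ = a * volume (Metric.closedBall x r)
        + (∫⁻ y in Metric.closedBall x r, f y ^ q) * a ^ (1 - q) := by
        rw [lintegral_add_left measurable_const, setLIntegral_const,
          lintegral_mul_const' _ _ (by rw [e]; exact ENNReal.ofReal_ne_top)]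
    _ ≤ a * volume (Metric.closedBall x r) + 1 * a ^ (1 - q) := by
        gcongr
        exact (setLIntegral_le_lintegral _ _).trans hintg
    _ = _ := by
        rw [one_mul, e, volume_closedBall_eq x hr.le, ha, ← ENNReal.ofReal_mul hap.le,
          ← ENNReal.ofReal_add (by positivity) (by positivity), add_mul, one_mul]
        congr 2
        rw [← mul_assoc, ← Real.rpow_natCast r n, ← Real.rpow_add hr, mul_comm]
        congr 2
        ring

/-- Hedberg's inequality for the Riesz potential. -/
lemma riesz_potential_le_hlMax {n : ℕ} (hn : 1 ≤ n) {β q κ : ℝ} (hβ : 0 < β) (hβn : β < n)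
    (hq : 1 < q) (hκ : 0 < κ) (hκq : κ = n / q - β) :
    ∃ C > (0:ℝ), ∀ f : Rn n → ℝ≥0∞, Measurable f → ∫⁻ y, f y ^ q ≤ 1 → ∀ x,
      ∫⁻ y, ‖x - y‖ₑ ^ (-((n:ℝ) - β)) * f y ≤ ENNReal.ofReal C * hlMax f x ^ (κ / (β + κ)) := by
  have hv := unitVol_nonneg n
  have hs : 0 < (n:ℝ) - β := by linarith
  obtain ⟨K₀, hK₀⟩ : ∃ K₀ : ℝ, K₀ = 2 ^ n * (1 + unitVol n) := ⟨_, rfl⟩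
  have hK0 : 0 < K₀ := by rw [hK₀]; positivity
  have h1K : unitVol n + 1 ≤ K₀ := by
    have : (1:ℝ) ≤ 2 ^ n := one_le_pow₀ one_le_two
    rw [hK₀]
    nlinarith
  refine ⟨((n:ℝ) - β) * (K₀ * (1 / β + 1 / κ)), by positivity, fun f hf hintg x => ?_⟩
  obtain ⟨s, hsdef⟩ : ∃ s : ℝ, s = (n:ℝ) - β := ⟨_, rfl⟩
  rw [← hsdef] at hs ⊢
  have hne : ∀ᵐ y ∂(volume : Measure (Rn n)), y ≠ x := by
    have : Nonempty (Fin n) := ⟨⟨0, hn⟩⟩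
    exact Measure.ae_ne volume x
  have hmeas : Measurable (Function.uncurry fun (y : Rn n) (r : ℝ) =>
      {r : ℝ | ‖x - y‖ ≤ r}.indicator (fun r => ENNReal.ofReal (r ^ (-s - 1))) r) := by
    have : Measurable ({z : Rn n × ℝ | ‖x - z.1‖ ≤ z.2}.indicator
        (fun z => ENNReal.ofReal (z.2 ^ (-s - 1)))) :=
      (ENNReal.measurable_ofReal.comp (measurable_snd.pow_const _)).indicator
        (measurableSet_le (by fun_prop) measurable_snd)
    exact this
  have hball : ∀ r : ℝ, ∫⁻ y, {r : ℝ | ‖x - y‖ ≤ r}.indicator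
        (fun r => ENNReal.ofReal (r ^ (-s - 1))) r * f y
      = ENNReal.ofReal (r ^ (-s - 1)) * ∫⁻ y in Metric.closedBall x r, f y := by
    intro r
    rw [← lintegral_const_mul' _ _ ENNReal.ofReal_ne_top,
      ← lintegral_indicator measurableSet_closedBall]
    refine lintegral_congr fun y => ?_
    by_cases hy : ‖x - y‖ ≤ r
    · rw [indicator_of_mem (s := {r : ℝ | ‖x - y‖ ≤ r}) hy, indicator_of_mem]
      rwa [Metric.mem_closedBall, dist_comm, dist_eq_norm]
    · rw [indicator_of_notMem (s := {r : ℝ | ‖x - y‖ ≤ r}) hy, indicator_of_notMem, zero_mul]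
      rwa [Metric.mem_closedBall, dist_comm, dist_eq_norm]
  have hintg1 : ∀ r > (0:ℝ), ENNReal.ofReal (r ^ (-s - 1)) * ∫⁻ y in Metric.closedBall x r, f y
      ≤ ENNReal.ofReal K₀ * min (hlMax f x * ENNReal.ofReal (r ^ (β - 1)))
        (ENNReal.ofReal (r ^ (-1 - κ))) := by
    intro r hr
    have hmono : Monotone fun z : ℝ≥0∞ => ENNReal.ofReal K₀ * z := fun _ _ h =>
      mul_le_mul_right h _
    rw [hmono.map_min]
    refine le_min ?_ ?_
    · refine (mul_le_mul_right (setLIntegral_closedBall_le f x hr) _).trans (le_of_eq ?_)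
      rw [← mul_assoc, ← ENNReal.ofReal_mul (by positivity),
        mul_comm (hlMax f x), ← mul_assoc (ENNReal.ofReal K₀), ← ENNReal.ofReal_mul hK0.le]
      congr 2
      rw [hK₀, show β - 1 = (-s - 1) + n by rw [hsdef]; ring, Real.rpow_add hr, Real.rpow_natCast]
      ring
    · refine (mul_le_mul_right (setLIntegral_closedBall_le_of_rpow hq hintg x hr) _).trans ?_
      rw [← ENNReal.ofReal_mul (by positivity), ← ENNReal.ofReal_mul hK0.le]
      refine ENNReal.ofReal_le_ofReal ?_
      rw [show -1 - κ = (-s - 1) + ((n:ℝ) - n / q) by rw [hsdef, hκq]; ring, Real.rpow_add hr,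
        mul_left_comm]
      gcongr
  have hpt : ∀ y, y ≠ x → ‖x - y‖ₑ ^ (-s) * f y
      ≤ ENNReal.ofReal s * ∫⁻ r in Ioi (0:ℝ), {r : ℝ | ‖x - y‖ ≤ r}.indicator
        (fun r => ENNReal.ofReal (r ^ (-s - 1))) r * f y := by
    intro y hy
    have hmy : Measurable fun r : ℝ => {r : ℝ | ‖x - y‖ ≤ r}.indicator
        (fun r => ENNReal.ofReal (r ^ (-s - 1))) r :=
      Measurable.indicator (by fun_prop) measurableSet_Ici
    have hxy : x - y ≠ 0 := sub_ne_zero.2 hy.symm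
    have h0 := enorm_rpow_le_lintegral hs hxy
    rw [lintegral_mul_const (f y) hmy, ← mul_assoc]
    exact mul_le_mul_left h0 (f y)
  calc ∫⁻ y, ‖x - y‖ₑ ^ (-s) * f y
      ≤ ∫⁻ y, ENNReal.ofReal s * ∫⁻ r in Ioi (0:ℝ), {r : ℝ | ‖x - y‖ ≤ r}.indicator
        (fun r => ENNReal.ofReal (r ^ (-s - 1))) r * f y := by
        exact lintegral_mono_ae (hne.mono hpt)
    _ = ENNReal.ofReal s * ∫⁻ r in Ioi (0:ℝ), ∫⁻ y, {r : ℝ | ‖x - y‖ ≤ r}.indicator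
        (fun r => ENNReal.ofReal (r ^ (-s - 1))) r * f y := by
        rw [lintegral_const_mul' _ _ ENNReal.ofReal_ne_top, lintegral_lintegral_swap]
        exact (hmeas.mul (hf.comp measurable_fst)).aemeasurable
    _ ≤ ENNReal.ofReal s * ∫⁻ r in Ioi (0:ℝ), ENNReal.ofReal K₀
        * min (hlMax f x * ENNReal.ofReal (r ^ (β - 1))) (ENNReal.ofReal (r ^ (-1 - κ))) := by
        refine mul_le_mul_right (setLIntegral_mono' measurableSet_Ioi fun r hr => ?_) _
        rw [hball]
        exact hintg1 r hr
    _ ≤ ENNReal.ofReal s * (ENNReal.ofReal K₀ *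
          (ENNReal.ofReal (1 / β + 1 / κ) * hlMax f x ^ (κ / (β + κ)))) := by
        rw [lintegral_const_mul' _ _ ENNReal.ofReal_ne_top]
        gcongr
        exact lintegral_le_of_le_rpow hβ hκ (fun r _ => min_le_left _ _)
          (fun r _ => min_le_right _ _)
    _ = _ := by
        rw [ENNReal.ofReal_mul hs.le, ENNReal.ofReal_mul hK0.le, mul_assoc, mul_assoc]

lemma measurable_timeSup {n : ℕ} {F : ℝ → Rn n → ℝ} (hF : Measurable (Function.uncurry F)) :
    Measurable (timeSup n F) := by
  refine measurable_of_Ioi fun a => ?_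
  have hset : MeasurableSet {z : Rn n × ℝ | a < ENNReal.ofReal |F z.2 z.1|} := by
    refine measurableSet_lt measurable_const (ENNReal.measurable_ofReal.comp ?_)
    exact (hF.comp measurable_swap).abs
  have hm := measurable_measure_prodMk_left (ν := volume.restrict (Ioi (0:ℝ))) hset
  have e : timeSup n F ⁻¹' Ioi a = {x | 0 < (volume.restrict (Ioi (0:ℝ)))
      (Prod.mk x ⁻¹' {z : Rn n × ℝ | a < ENNReal.ofReal |F z.2 z.1|})} := by
    ext x
    rw [mem_preimage, mem_Ioi, mem_ofPred_eq, ← not_iff_not, not_lt, not_lt, nonpos_iff_eq_zero]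
    have hiff : timeSup n F x ≤ a ↔
        ∀ᵐ t ∂(volume.restrict (Ioi (0:ℝ))), ENNReal.ofReal |F t x| ≤ a :=
      ⟨fun h => (ENNReal.ae_le_essSup _).mono fun t ht => ht.trans h,
        fun h => essSup_le_of_ae_le _ h⟩
    rw [hiff, ae_iff]
    simp only [not_le]
    rfl
  rw [e]
  exact measurableSet_lt measurable_const hm

/-- The majorant of the kernels `∂_j 𝔤_τ^α`. -/
def kerBound (n : ℕ) (α τ : ℝ) (w : Rn n) : ℝ≥0∞ :=
  min (‖w‖ₑ ^ (-((n:ℝ) + 1))) (ENNReal.ofReal (τ ^ (-(((n:ℝ) + 1) / (2 * α)))))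

lemma exists_enorm_dKer_le {n : ℕ} (hn : 1 ≤ n) {α : ℝ} (hα : 0 < α) (hα1 : α ≤ 1) :
    ∃ C > (0:ℝ), ∀ t > 0, ∀ (j : Fin n) (w : Rn n),
      ‖dKer n α t j w‖ₑ ≤ ENNReal.ofReal C * kerBound n α t w := by
  obtain ⟨C, hC, h⟩ := exists_dKer_bounds hn hα hα1
  refine ⟨C, hC, fun t ht j w => ?_⟩
  obtain ⟨h1, h2⟩ := h t ht j w
  have hmono : Monotone fun z : ℝ≥0∞ => ENNReal.ofReal C * z := fun _ _ h =>
    mul_le_mul_right h _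
  rw [kerBound, hmono.map_min, Real.enorm_eq_ofReal_abs]
  refine le_min ?_ ?_
  · by_cases hw : w = 0
    · rw [hw, enorm_zero, ENNReal.zero_rpow_of_neg (by linarith [n.cast_nonneg (α := ℝ)]),
        ENNReal.mul_top (ENNReal.ofReal_pos.2 hC).ne']
      exact le_top
    · have hw0 : 0 < ‖w‖ := norm_pos_iff.2 hw
      rw [← ofReal_norm, ENNReal.ofReal_rpow_of_pos hw0, ← ENNReal.ofReal_mul hC.le]
      refine ENNReal.ofReal_le_ofReal ?_
      rw [Real.rpow_neg hw0.le, ← div_eq_mul_inv, le_div_iff₀ (by positivity), mul_comm]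
      have : ‖w‖ ^ ((n:ℝ) + 1) = ‖w‖ ^ (n + 1) := by
        rw [← Real.rpow_natCast]; push_cast; rfl
      rwa [this]
  · rw [← ENNReal.ofReal_mul hC.le]
    exact ENNReal.ofReal_le_ofReal h2

lemma exists_lintegral_kerBound_le {n : ℕ} {α : ℝ} (hα : 1 / 2 < α)
    (hαn : 2 * α - 1 < n) :
    ∃ C > (0:ℝ), ∀ w : Rn n, ∫⁻ τ in Ioi (0:ℝ), kerBound n α τ w
      ≤ ENNReal.ofReal C * ‖w‖ₑ ^ (-((n:ℝ) - (2 * α - 1))) := by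
  have hn0 : (0:ℝ) ≤ n := n.cast_nonneg
  set κ : ℝ := ((n:ℝ) + 1) / (2 * α) - 1 with hκ
  have hκ0 : 0 < κ := by
    rw [hκ, sub_pos, lt_div_iff₀ (by linarith)]
    linarith
  refine ⟨1 / 1 + 1 / κ, by positivity, fun w => ?_⟩
  have := lintegral_le_of_le_rpow one_pos hκ0 (a := ‖w‖ₑ ^ (-((n:ℝ) + 1)))
    (h := fun τ => kerBound n α τ w) (fun r hr => ?_) (fun r hr => ?_)
  · refine this.trans (le_of_eq ?_)
    rw [← ENNReal.rpow_mul]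
    congr 2
    rw [hκ]
    field_simp
    ring
  · rw [sub_self, Real.rpow_zero, ENNReal.ofReal_one, mul_one]
    exact min_le_left _ _
  · rw [show -1 - κ = -(((n:ℝ) + 1) / (2 * α)) by rw [hκ]; ring]
    exact min_le_right _ _

/-- The Duhamel term is dominated by a Riesz potential of the time-supremum. -/
lemma exists_timeSup_duhamel_le {n : ℕ} (hn : 1 ≤ n) {α : ℝ} (hα : 1 / 2 < α) (hα1 : α ≤ 1)
    (hαn : 2 * α - 1 < n) :
    ∃ C > (0:ℝ), ∀ F : ℝ → Rn n → ℝ, Measurable (Function.uncurry F) → ∀ x,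
      timeSup n (fun t x => ∑ j : Fin n, ∫ s in Ioc (0:ℝ) t,
        conv n (dKer n α (t - s) j) (F s) x) x
      ≤ ENNReal.ofReal C * ∫⁻ y, ‖x - y‖ₑ ^ (-((n:ℝ) - (2 * α - 1))) * timeSup n F y := by
  obtain ⟨C₁, hC₁, h₁⟩ := exists_enorm_dKer_le hn (by linarith : 0 < α) hα1
  obtain ⟨C₂, hC₂, h₂⟩ := exists_lintegral_kerBound_le hα hαn
  have hn0 : (0:ℝ) < n := by exact_mod_cast hn
  refine ⟨n * (C₁ * C₂), by positivity, fun F hF x => essSup_le_of_ae_le _ (ae_of_all _ ?_)⟩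
  intro t
  have hF' : Measurable fun z : ℝ × Rn n => ‖F z.1 z.2‖ₑ := hF.enorm
  have hker : Measurable fun z : ℝ × Rn n => kerBound n α (t - z.1) (x - z.2) := by
    unfold kerBound
    fun_prop
  have hterm : ∀ j : Fin n, ‖∫ s in Ioc (0:ℝ) t, conv n (dKer n α (t - s) j) (F s) x‖ₑ
      ≤ ENNReal.ofReal (C₁ * C₂)
        * ∫⁻ y, ‖x - y‖ₑ ^ (-((n:ℝ) - (2 * α - 1))) * timeSup n F y := by
    intro j
    calc ‖∫ s in Ioc (0:ℝ) t, conv n (dKer n α (t - s) j) (F s) x‖ₑ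
        ≤ ∫⁻ s in Ioc (0:ℝ) t, ‖conv n (dKer n α (t - s) j) (F s) x‖ₑ :=
          enorm_integral_le_lintegral_enorm _
      _ = ∫⁻ s in Ioo (0:ℝ) t, ‖conv n (dKer n α (t - s) j) (F s) x‖ₑ :=
          (setLIntegral_congr Ioo_ae_eq_Ioc).symm
      _ ≤ ∫⁻ s in Ioo (0:ℝ) t, ENNReal.ofReal C₁
            * ∫⁻ y, kerBound n α (t - s) (x - y) * ‖F s y‖ₑ := by
          refine setLIntegral_mono' measurableSet_Ioo fun s hs => ?_
          rw [← lintegral_const_mul' _ _ ENNReal.ofReal_ne_top]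
          refine (enorm_integral_le_lintegral_enorm _).trans (lintegral_mono fun y => ?_)
          rw [enorm_mul, ← mul_assoc]
          exact mul_le_mul_left (h₁ (t - s) (by linarith [hs.2]) j (x - y)) _
      _ = ENNReal.ofReal C₁ * ∫⁻ y, ∫⁻ s in Ioo (0:ℝ) t,
            kerBound n α (t - s) (x - y) * ‖F s y‖ₑ := by
          rw [lintegral_const_mul' _ _ ENNReal.ofReal_ne_top, lintegral_lintegral_swap]
          exact (hker.mul hF').aemeasurable
      _ ≤ ENNReal.ofReal C₁ * ∫⁻ y, ENNReal.ofReal C₂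
            * (‖x - y‖ₑ ^ (-((n:ℝ) - (2 * α - 1))) * timeSup n F y) := by
          refine mul_le_mul_right (lintegral_mono fun y => ?_) _
          have hkm' : Measurable fun s => kerBound n α (t - s) (x - y) := by
            unfold kerBound
            fun_prop
          calc ∫⁻ s in Ioo (0:ℝ) t, kerBound n α (t - s) (x - y) * ‖F s y‖ₑ
              ≤ ∫⁻ s in Ioo (0:ℝ) t, kerBound n α (t - s) (x - y) * timeSup n F y := by
                refine lintegral_mono_ae ?_
                have hae : ∀ᵐ s ∂(volume.restrict (Ioi (0:ℝ))), ‖F s y‖ₑ ≤ timeSup n F y := by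
                  filter_upwards [ENNReal.ae_le_essSup (μ := volume.restrict (Ioi (0:ℝ)))
                    (fun t => ENNReal.ofReal |F t y|)] with s hs
                  rw [Real.enorm_eq_ofReal_abs]
                  exact hs
                filter_upwards [ae_restrict_of_ae_restrict_of_subset Ioo_subset_Ioi_self hae]
                  with s hs
                exact mul_le_mul_right hs _
            _ = (∫⁻ s in Ioo (0:ℝ) t, kerBound n α (t - s) (x - y)) * timeSup n F y :=
                lintegral_mul_const _ hkm'
            _ ≤ (∫⁻ τ in Ioi (0:ℝ), kerBound n α τ (x - y)) * timeSup n F y := by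
                refine mul_le_mul_left ?_ _
                rw [← lintegral_indicator measurableSet_Ioi, ← lintegral_indicator measurableSet_Ioo,
                  ← lintegral_sub_left_eq_self _ t]
                refine lintegral_mono fun s => ?_
                by_cases hs : t - s ∈ Ioo 0 t
                · rw [indicator_of_mem hs, indicator_of_mem (by simpa using hs.2),
                    sub_sub_cancel]
                · rw [indicator_of_notMem hs]; exact zero_le
            _ ≤ _ := by
                rw [← mul_assoc]
                exact mul_le_mul_left (h₂ _) _
      _ = _ := by
          rw [lintegral_const_mul' _ _ ENNReal.ofReal_ne_top, ENNReal.ofReal_mul hC₁.le, mul_assoc]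
  show ENNReal.ofReal |∑ j : Fin n, ∫ s in Ioc (0:ℝ) t, conv n (dKer n α (t - s) j) (F s) x| ≤ _
  rw [← Real.enorm_eq_ofReal_abs]
  refine (enorm_sum_le _ _).trans ((Finset.sum_le_sum fun j _ => hterm j).trans (le_of_eq ?_))
  rw [Finset.sum_const, Finset.card_univ, Fintype.card_fin, nsmul_eq_mul, ← mul_assoc,
    ENNReal.ofReal_mul hn0.le, ENNReal.ofReal_natCast]

/-- Log-Hölder exponents are continuous, hence their a.e. bounds hold everywhere. -/
lemma exists_logHolder_bounds {n : ℕ} (hn : 1 ≤ n) {p : Rn n → ℝ} (hp : IsPLog univ p) {pm P : ℝ}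
    (hpm1 : 1 < pm) (hpm : ∀ᵐ x ∂(volume : Measure (Rn n)), pm ≤ p x)
    (hP : ∀ᵐ x ∂(volume : Measure (Rn n)), p x ≤ P) :
    (∀ x, pm ≤ p x) ∧ (∀ x, p x ≤ P) ∧ ∃ D ≥ (0:ℝ), ∃ pinf ≥ pm,
      (∀ x y, x ≠ y → |p x - p y| ≤ D / Real.log (Real.exp 1 + 1 / ‖x - y‖)) ∧
      ∀ x, |p x - pinf| ≤ D / Real.log (Real.exp 1 + ‖x‖) := by
  obtain ⟨-, hp1, C₁, hC₁, C₂, hC₂, pinf, hloc, hdec⟩ := hp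
  have hp1 : ∀ x, 1 ≤ p x := fun x => hp1 x (mem_univ x)
  have hp0 : ∀ x, 0 < p x := fun x => zero_lt_one.trans_le (hp1 x)
  have he := Real.one_lt_exp_iff.2 zero_lt_one
  have hcont1 : Continuous fun x => 1 / p x := by
    refine continuous_iff_continuousAt.2 fun x => continuousAt_iff_punctured_nhds.2 ?_
    rw [tendsto_iff_norm_sub_tendsto_zero]
    have h1 : Tendsto (fun y => ‖y - x‖) (𝓝[≠] x) (𝓝[>] 0) := tendsto_norm_sub_self_nhdsNE x
    have h2 : Tendsto (fun y => C₁ / Real.log (Real.exp 1 + 1 / ‖y - x‖)) (𝓝[≠] x) (𝓝 0) := by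
      refine Tendsto.div_atTop tendsto_const_nhds (Real.tendsto_log_atTop.comp ?_)
      refine tendsto_atTop_add_const_left _ _ ?_
      simp_rw [one_div]
      exact tendsto_inv_nhdsGT_zero.comp h1
    refine squeeze_zero' (Eventually.of_forall fun _ => norm_nonneg _) ?_ h2
    filter_upwards [self_mem_nhdsWithin] with y hy
    exact hloc y (mem_univ y) x (mem_univ x) hy
  have hcont : Continuous p := by
    have : p = fun x => 1 / (1 / p x) := by ext x; rw [one_div_one_div]
    rw [this]
    exact continuous_const.div hcont1 fun x => (one_div_pos.2 (hp0 x)).ne'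
  have hpm' : ∀ x, pm ≤ p x := by
    have h0 : {x | p x < pm} = ∅ := by
      refine (IsOpen.measure_eq_zero_iff volume (isOpen_lt hcont continuous_const)).1 ?_
      simpa [ae_iff] using hpm
    intro x
    by_contra h
    have : x ∈ {x | p x < pm} := not_le.1 h
    rw [h0] at this
    exact this
  have hP' : ∀ x, p x ≤ P := by
    have h0 : {x | P < p x} = ∅ := by
      refine (IsOpen.measure_eq_zero_iff volume (isOpen_lt continuous_const hcont)).1 ?_
      simpa [ae_iff] using hP
    intro x
    by_contra h
    have : x ∈ {x | P < p x} := not_le.1 h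
    rw [h0] at this
    exact this
  have hP0 : 0 < P := (hp0 0).trans_le (hP' 0)
  have hpm0 : 0 < pm := by linarith
  have hlim : Tendsto (fun x => 1 / p x) (cocompact (Rn n)) (𝓝 (1 / pinf)) := by
    rw [tendsto_iff_norm_sub_tendsto_zero]
    have h2 : Tendsto (fun y : Rn n => C₂ / Real.log (Real.exp 1 + ‖y‖)) (cocompact (Rn n))
        (𝓝 0) := by
      refine Tendsto.div_atTop tendsto_const_nhds (Real.tendsto_log_atTop.comp ?_)
      exact tendsto_atTop_add_const_left _ _ (tendsto_norm_cocompact_atTop)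
    exact squeeze_zero (fun _ => norm_nonneg _) (fun x => hdec x (mem_univ x)) h2
  have hne : Nonempty (Fin n) := ⟨⟨0, hn⟩⟩
  have hnc : NoncompactSpace (Rn n) := NormedSpace.noncompactSpace ℝ (Rn n)
  have hlo : 1 / P ≤ 1 / pinf :=
    ge_of_tendsto' hlim fun x => one_div_le_one_div_of_le (hp0 x) (hP' x)
  have hhi : 1 / pinf ≤ 1 / pm :=
    le_of_tendsto' hlim fun x => one_div_le_one_div_of_le hpm0 (hpm' x)
  have hinf0 : 0 < pinf := one_div_pos.1 ((one_div_pos.2 hP0).trans_le hlo)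
  have hinfP : pinf ≤ P := (one_div_le_one_div hP0 hinf0).1 hlo
  have key : ∀ a b : ℝ, 0 < a → 0 < b → a ≤ P → b ≤ P → |a - b| ≤ P ^ 2 * |1 / a - 1 / b| := by
    intro a b ha hb haP hbP
    have e : a - b = -(a * b * (1 / a - 1 / b)) := by field_simp; ring
    rw [e, abs_neg, abs_mul, abs_of_pos (mul_pos ha hb), sq]
    gcongr
  refine ⟨hpm', hP', P ^ 2 * (C₁ + C₂), by positivity, pinf,
    (one_div_le_one_div hinf0 hpm0).1 hhi, fun x y hxy => ?_, fun x => ?_⟩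
  · refine (key _ _ (hp0 x) (hp0 y) (hP' x) (hP' y)).trans ?_
    rw [mul_div_assoc]
    refine mul_le_mul_of_nonneg_left ((hloc x (mem_univ x) y (mem_univ y) hxy).trans ?_)
      (by positivity)
    have : 0 ≤ Real.log (Real.exp 1 + 1 / ‖x - y‖) :=
      Real.log_nonneg (by have : 0 ≤ 1 / ‖x - y‖ := by positivity
                          linarith)
    gcongr
    linarith
  · refine (key _ _ (hp0 x) hinf0 (hP' x) hinfP).trans ?_
    rw [mul_div_assoc]
    refine mul_le_mul_of_nonneg_left ((hdec x (mem_univ x)).trans ?_) (by positivity)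
    have : 0 ≤ Real.log (Real.exp 1 + ‖x‖) := Real.log_nonneg (by linarith [norm_nonneg x])
    gcongr
    linarith

lemma lintegral_le_one_of_luxNorm_lt {Ω : Type*} [MeasurableSpace Ω] {μ : Measure Ω} {p : Ω → ℝ}
    (hp : ∀ x, 0 ≤ p x) {f : Ω → ℝ≥0∞} {lam : ℝ≥0∞} (h : luxNorm μ p f < lam) :
    ∫⁻ x, (f x / lam) ^ p x ∂μ ≤ 1 := by
  obtain ⟨l, ⟨_, hl⟩, hlt⟩ := sInf_lt_iff.1 h
  exact (lintegral_mono fun x => ENNReal.rpow_le_rpow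
    (ENNReal.div_le_div_left hlt.le _) (hp x)).trans hl

lemma luxNorm_le_of_lintegral_le {Ω : Type*} [MeasurableSpace Ω] {μ : Measure Ω} {p : Ω → ℝ}
    (hp : ∀ x, 1 ≤ p x) {f : Ω → ℝ≥0∞} {M : ℝ≥0∞} (hM : M ≠ 0) {K : ℝ} (hK : 1 ≤ K)
    (h : ∫⁻ x, (f x / M) ^ p x ∂μ ≤ ENNReal.ofReal K) :
    luxNorm μ p f ≤ ENNReal.ofReal K * M := by
  have hK0 : 0 < K := by linarith
  have hKe : ENNReal.ofReal K ≠ 0 := (ENNReal.ofReal_pos.2 hK0).ne'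
  refine sInf_le ⟨ENNReal.mul_pos hKe hM, ?_⟩
  have hpt : ∀ x, (f x / (ENNReal.ofReal K * M)) ^ p x
      ≤ (ENNReal.ofReal K)⁻¹ * (f x / M) ^ p x := by
    intro x
    have e : f x / (ENNReal.ofReal K * M) = (ENNReal.ofReal K)⁻¹ * (f x / M) := by
      rw [div_eq_mul_inv, div_eq_mul_inv,
        ENNReal.mul_inv (Or.inl hKe) (Or.inl ENNReal.ofReal_ne_top)]
      ring
    rw [e, ENNReal.mul_rpow_of_nonneg _ _ (zero_le_one.trans (hp x))]
    refine mul_le_mul_left (ENNReal.rpow_le_self_of_le_one ?_ (hp x)) _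
    rw [ENNReal.inv_le_one, ENNReal.one_le_ofReal]
    exact hK
  calc ∫⁻ x, (f x / (ENNReal.ofReal K * M)) ^ p x ∂μ
      ≤ ∫⁻ x, (ENNReal.ofReal K)⁻¹ * (f x / M) ^ p x ∂μ := lintegral_mono hpt
    _ = (ENNReal.ofReal K)⁻¹ * ∫⁻ x, (f x / M) ^ p x ∂μ :=
        lintegral_const_mul' _ _ (ENNReal.inv_ne_top.2 hKe)
    _ ≤ (ENNReal.ofReal K)⁻¹ * ENNReal.ofReal K := by gcongr
    _ = 1 := ENNReal.inv_mul_cancel hKe ENNReal.ofReal_ne_top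

end Auxiliary

/-- Control of the external force term (γ = 1) in mixed variable Lebesgue spaces. -/
theorem stmt6 (n b : ℕ) (hn : 1 ≤ n) (hb : 1 ≤ b) (α : ℝ) (hα : 1/2 < α ∧ α ≤ 1)
    (h2α : 2 * α - 1 < n) (hnb : (2 * α - 1) * ((b:ℝ) + 1) < (n:ℝ) * b)
    (p : Rn n → ℝ) (hplog : IsPLog univ p)
    (hpminus : ∃ pm : ℝ, (b:ℝ) + 1 < pm ∧ ∀ᵐ x ∂(volume : Measure (Rn n)), pm ≤ p x)
    (hpplus : ∃ P : ℝ, (∀ᵐ x ∂(volume : Measure (Rn n)), p x ≤ P) ∧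
      (2 * α - 1) * P < (n:ℝ) * ((b:ℝ) + 1)) :
    ∃ C > (0:ℝ), ∀ F : ℝ → Rn n → ℝ, Measurable (Function.uncurry F) →
      mixedN n p ((n:ℝ) * b / (2 * α - 1))
        (fun t x => ∑ j : Fin n, ∫ s in Ioc (0:ℝ) t, conv n (dKer n α (t - s) j) (F s) x)
      ≤ ENNReal.ofReal C
        * mixedN n (fun x => p x / ((b:ℝ) + 1)) ((n:ℝ) * b / (((b:ℝ) + 1) * (2 * α - 1))) F := by
  obtain ⟨pm, hbpm, hpm⟩ := hpminus
  obtain ⟨P, hP, -⟩ := hpplus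
  have hb1 : (1:ℝ) ≤ b := by exact_mod_cast hb
  have hn1 : (1:ℝ) ≤ n := by exact_mod_cast hn
  have hb0 : (0:ℝ) < (b:ℝ) + 1 := by linarith
  have hpmeas : Measurable p := hplog.1
  obtain ⟨hpm', hP', D, hD, pinf, hpinf, hloc, hdec⟩ :=
    exists_logHolder_bounds hn hplog (by linarith) hpm hP
  set β : ℝ := 2 * α - 1 with hβ
  have hβ0 : 0 < β := by linarith [hα.1]
  set q₀ : ℝ := (n:ℝ) * b / (((b:ℝ) + 1) * β) with hq₀
  have hq₀1 : 1 < q₀ := by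
    rw [hq₀, one_lt_div (by positivity)]
    linarith
  have hκ : β / b = n / q₀ - β := by
    rw [hq₀]
    field_simp
    ring
  have hθ : β / b / (β + β / b) = 1 / ((b:ℝ) + 1) := by
    field_simp
  have hdiv : ∀ u v R : ℝ, |u - v| ≤ R → |u / ((b:ℝ) + 1) - v / ((b:ℝ) + 1)| ≤ R := by
    intro u v R h
    rw [← sub_div, abs_div, abs_of_pos hb0]
    exact (div_le_self (abs_nonneg _) (by linarith)).trans h
  obtain ⟨C₁, hC₁, h₁⟩ := exists_timeSup_duhamel_le hn hα.1 hα.2 h2α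
  obtain ⟨C₂, hC₂, h₂⟩ := riesz_potential_le_hlMax hn hβ0 h2α hq₀1 (by positivity) hκ
  obtain ⟨C₃, hC₃, h₃⟩ := lintegral_hlMax_rpow_var_le hn (hpmeas.div_const ((b:ℝ) + 1))
    (qm := pm / ((b:ℝ) + 1)) (Q := P / ((b:ℝ) + 1)) (D := D) (qinf := pinf / ((b:ℝ) + 1))
    (by rw [one_lt_div hb0]; exact hbpm)
    (fun x => div_le_div_of_nonneg_right (hpm' x) hb0.le)
    (fun x => div_le_div_of_nonneg_right (hP' x) hb0.le) hD
    (by rw [one_lt_div hb0]; exact hbpm.trans_le hpinf)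
    (fun x y hxy => hdiv _ _ _ (hloc x y hxy)) (fun x => hdiv _ _ _ (hdec x))
  obtain ⟨C₄, hC₄, h₄⟩ := lintegral_hlMax_rpow_le hn hq₀1
  have hK1 : 1 ≤ 1 + C₃ + C₄ := by linarith
  refine ⟨(1 + C₃ + C₄) * (C₁ * C₂), by positivity, fun F hF => ?_⟩
  set u : ℝ → Rn n → ℝ := fun t x => ∑ j : Fin n, ∫ s in Ioc (0:ℝ) t,
    conv n (dKer n α (t - s) j) (F s) x with hu
  have main : ∀ L, mixedN n (fun x => p x / ((b:ℝ) + 1)) q₀ F < L → L ≠ ∞ →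
      mixedN n p ((n:ℝ) * b / β) u ≤ ENNReal.ofReal ((1 + C₃ + C₄) * (C₁ * C₂)) * L := by
    intro L hL hLt
    have hL0 : L ≠ 0 := (lt_of_le_of_lt zero_le hL).ne'
    set f : Rn n → ℝ≥0∞ := fun y => timeSup n F y / L with hf
    have hfm : Measurable f := (measurable_timeSup hF).div_const L
    have hmod1 : ∫⁻ x, f x ^ (p x / ((b:ℝ) + 1)) ≤ 1 :=
      lintegral_le_one_of_luxNorm_lt
        (fun x => div_nonneg (by linarith [hpm' x]) hb0.le) ((le_max_left _ _).trans_lt hL)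
    have hmod2 : ∫⁻ x, f x ^ q₀ ≤ 1 :=
      lintegral_le_one_of_luxNorm_lt (fun _ => by linarith) ((le_max_right _ _).trans_lt hL)
    have hM0 : ENNReal.ofReal (C₁ * C₂) * L ≠ 0 :=
      mul_ne_zero (ENNReal.ofReal_pos.2 (by positivity)).ne' hL0
    have hpt : ∀ x, timeSup n u x / (ENNReal.ofReal (C₁ * C₂) * L)
        ≤ hlMax f x ^ (1 / ((b:ℝ) + 1)) := by
      intro x
      refine ENNReal.div_le_of_le_mul ?_
      have hFf : ∀ y, timeSup n F y = L * f y := fun y =>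
        (ENNReal.mul_div_cancel hL0 hLt).symm
      calc timeSup n u x
          ≤ ENNReal.ofReal C₁ * ∫⁻ y, ‖x - y‖ₑ ^ (-((n:ℝ) - β)) * timeSup n F y := h₁ F hF x
        _ = ENNReal.ofReal C₁ * (L * ∫⁻ y, ‖x - y‖ₑ ^ (-((n:ℝ) - β)) * f y) := by
            rw [← lintegral_const_mul' _ _ hLt]
            congr 1
            refine lintegral_congr fun y => ?_
            rw [hFf y, mul_left_comm]
        _ ≤ ENNReal.ofReal C₁ * (L * (ENNReal.ofReal C₂ * hlMax f x ^ (1 / ((b:ℝ) + 1)))) := by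
            have := h₂ f hfm hmod2 x
            rw [hθ] at this
            gcongr
        _ = _ := by
            rw [ENNReal.ofReal_mul hC₁.le]
            ring
    have hb1' : ∀ x, 1 ≤ p x := fun x => by linarith [hpm' x]
    have hr1 : 1 ≤ (n:ℝ) * b / β := by
      rw [one_le_div hβ0]
      nlinarith
    rw [ENNReal.ofReal_mul (by linarith), mul_assoc]
    refine max_le ?_ ?_
    · refine luxNorm_le_of_lintegral_le hb1' hM0 hK1 ?_
      calc ∫⁻ x, (timeSup n u x / (ENNReal.ofReal (C₁ * C₂) * L)) ^ p x
          ≤ ∫⁻ x, hlMax f x ^ (p x / ((b:ℝ) + 1)) := by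
            refine lintegral_mono fun x => ?_
            refine (ENNReal.rpow_le_rpow (hpt x) (zero_le_one.trans (hb1' x))).trans (le_of_eq ?_)
            rw [← ENNReal.rpow_mul, one_div_mul_eq_div]
        _ ≤ ENNReal.ofReal C₃ := h₃ f hfm hmod1
        _ ≤ _ := ENNReal.ofReal_le_ofReal (by linarith)
    · refine luxNorm_le_of_lintegral_le (fun _ => hr1) hM0 hK1 ?_
      calc ∫⁻ x, (timeSup n u x / (ENNReal.ofReal (C₁ * C₂) * L)) ^ ((n:ℝ) * b / β)
          ≤ ∫⁻ x, hlMax f x ^ q₀ := by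
            refine lintegral_mono fun x => ?_
            refine (ENNReal.rpow_le_rpow (hpt x) (zero_le_one.trans hr1)).trans (le_of_eq ?_)
            rw [← ENNReal.rpow_mul]
            congr 1
            rw [hq₀]
            field_simp
        _ ≤ ENNReal.ofReal C₄ * ∫⁻ x, f x ^ q₀ := h₄ f hfm
        _ ≤ ENNReal.ofReal C₄ := mul_le_of_le_one_right' hmod2
        _ ≤ _ := ENNReal.ofReal_le_ofReal (by linarith)
  have hc0 : ENNReal.ofReal ((1 + C₃ + C₄) * (C₁ * C₂)) ≠ 0 :=
    (ENNReal.ofReal_pos.2 (by positivity)).ne'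
  rw [mul_comm (ENNReal.ofReal _) (mixedN _ _ _ _), ← ENNReal.div_le_iff hc0 ENNReal.ofReal_ne_top]
  refine le_of_forall_gt_imp_ge_of_dense fun L hL => ?_
  by_cases hLt : L = ∞
  · rw [hLt]; exact le_top
  · rw [ENNReal.div_le_iff hc0 ENNReal.ofReal_ne_top, mul_comm L]
    exact main L hL hLt
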